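/- arXiv:2212.01500 — 3 statements merged into one kernel-verified Lean document; each statement's English description precedes it below -/
import Mathlib

section
/- Let n ≥ 2 and let y_1, …, y_n be nonzero real numbers with |y_i| < |y_{i+1}| for i = 1, …, n−1. Let p be the number of indices i with y_i > 0 and m = n − p the number of indices with y_i < 0. Then ∏_{1 ≤ i < j ≤ n} (1 − y_i/y_j) ≤ 2^{min(p, m)}. -/
open Finset

/-!
Replacing `y` by `-y` if necessary, assume `y₁ > 0`. Follow the walk that steps up at positive and
down at negative entries, and cut the sequence just after the entry `a` at which the walk first
attains its maximum. Read outwards from the cut, the entries before `a` never have more negatives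
than positives, and the entries after `a` never have more positives than negatives.

If `a` is the last entry, removing it does not decrease the product. Otherwise the next entry `b` is
negative, and removing `a` and `b` lowers both sign counts by one; it remains to see that the
factors involving `a` or `b` have product at most `2`. For `x` before `a`,
`(1 - x / a) * (1 - x / b) ≤ 1 - x * (1 / a + 1 / b)`, where `1 / a + 1 / b ≥ 0`; the bounds on the
right have product at most `1`, since every negative `x` can be matched with a larger positive one
and `(1 - u) * (1 + v) ≤ 1` for `0 ≤ v ≤ u`. The factors after `b` are treated in the same way with
`-1 / x` for `x`, except that, once `b` is gone, one positive `x` may be left without a partner. Its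
factors are absorbed together with `1 - a / b`: with `u = -a / b` and `w = -b / x`, their product is
`(1 + u) * (1 - u * w) * (1 + w) ≤ 2`.
-/

section Ballot

variable {α : Type*} {P : α → Bool} {l : List α}

/-- The ballot condition: no initial segment of `l` has more entries failing `P` than entries
satisfying `P`. -/
def IsBallot (P : α → Bool) (l : List α) : Prop :=
  ∀ p, p <+: l → p.countP (!P ·) ≤ p.countP P

lemma isBallot_not :
    IsBallot (!P ·) l ↔ ∀ p, p <+: l → p.countP P ≤ p.countP (!P ·) := by
  simp only [IsBallot, Bool.not_not]

namespace IsBallot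

lemma of_isPrefix {k : List α} (hl : IsBallot P l) (hk : k <+: l) : IsBallot P k :=
  fun p hp => hl p (hp.trans hk)

lemma head {x : α} (h : IsBallot P (x :: l)) : P x = true := by
  by_contra hx
  simpa [hx] using h [x] (by simp)

-- `b` is the entry at which `l` first violates the ballot condition. Keeping track of the balance
-- of `A` is what makes the induction go through.
lemma tail_or_exists_eq_append {x : α} (h : IsBallot P (x :: l)) :
    IsBallot P l ∨ ∃ A b B, l = A ++ b :: B ∧ P b = false ∧
      A.countP (!P ·) = A.countP P ∧ IsBallot P A ∧ IsBallot P B := by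
  induction l using List.reverseRecOn with
  | nil => exact .inl fun p hp => by simp [List.prefix_nil.1 hp]
  | append_singleton l y ih =>
    rcases ih (h.of_isPrefix (by simp)) with hl | ⟨A, b, B, rfl, hb, hA₀, hA, -⟩
    · by_cases hy : (l ++ [y]).countP (!P ·) ≤ (l ++ [y]).countP P
      · refine .inl fun p hp => ?_
        rcases List.prefix_concat_iff.1 hp with rfl | hp
        exacts [hy, hl p hp]
      · have hl_le := hl l List.prefix_rfl
        have hxl := h _ List.prefix_rfl
        refine .inr ⟨l, y, [], rfl, ?_, ?_, hl, fun p hp => by simp [List.prefix_nil.1 hp]⟩ <;>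
          grind
    · refine .inr ⟨A, b, B ++ [y], by simp, hb, hA₀, hA, fun p hp => ?_⟩
      have hxp := h (x :: A ++ b :: p) (by simpa [List.prefix_append_right_inj] using hp)
      grind

end IsBallot

-- The cut is at the first maximum of the walk that steps up at entries satisfying `P` and down at
-- the others.
lemma exists_eq_append_isBallot_not (P : α → Bool) (l : List α) :
    ∃ L R, l = L ++ R ∧ IsBallot (!P ·) R ∧
      ∀ S, S <:+ L → S ≠ [] → S.countP (!P ·) < S.countP P := by
  induction l with
  | nil => exact ⟨[], [], rfl, fun p hp => by simp [List.prefix_nil.1 hp], by simp⟩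
  | cons x l ih =>
    obtain ⟨L, R, rfl, hR, hL⟩ := ih
    by_cases hxL : (x :: L).countP (!P ·) < (x :: L).countP P
    · refine ⟨x :: L, R, rfl, hR, fun S hS hS₀ => ?_⟩
      rcases List.suffix_cons_iff.1 hS with rfl | hS
      exacts [hxL, hL S hS hS₀]
    · refine ⟨[], x :: (L ++ R), rfl, isBallot_not.2 fun p hp => ?_, by simp⟩
      rcases List.prefix_cons_iff.1 hp with rfl | ⟨q, rfl, t, hqt⟩
      · simp
      rcases List.append_eq_append_iff.1 hqt with ⟨S, rfl, -⟩ | ⟨r, rfl, rfl⟩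
      · have hS : S = [] ∨ S.countP (!P ·) < S.countP P :=
          or_iff_not_imp_left.2 (hL S (List.suffix_append q S))
        grind
      · have hr := isBallot_not.1 hR r (List.prefix_append r t)
        grind

lemma exists_peak {x : α} (hx : P x) (l : List α) :
    ∃ L a R, x :: l = L ++ a :: R ∧ P a ∧ IsBallot P L.reverse ∧ IsBallot (!P ·) R := by
  obtain ⟨L, R, hLR, hR, hL⟩ := exists_eq_append_isBallot_not P (x :: l)
  rcases L.eq_nil_or_concat' with rfl | ⟨L, a, rfl⟩
  · obtain rfl : x :: l = R := hLR
    simpa [hx] using hR.head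
  · have ha : P a := by
      by_contra ha
      simpa [ha] using hL [a] (by simp) (by simp)
    refine ⟨L, a, R, by simpa using hLR, ha, fun p hp => ?_, hR⟩
    have hp' : p.reverse ++ [a] <:+ L ++ [a] :=
      List.reverse_prefix.1 (by simpa using hp)
    have hcount := hL _ hp' (by simp)
    simp only [List.countP_append, List.countP_reverse, List.countP_singleton] at hcount
    grind

end Ballot

section BallotProduct

variable {α K : Type*} [CommRing K] [LinearOrder K] [IsStrictOrderedRing K] {P : α → Bool}
  {l : List α} {f g : α → K}

-- `w` and the exponent are there for the induction: each surplus positive entry contributes a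
-- factor `1 - w`, ready to cancel a later negative one.
lemma IsBallot.prod_map_le_one_sub_pow (hl : IsBallot P l)
    (hanti : l.Pairwise fun x y => |f y| ≤ |f x|) (hf : ∀ x ∈ l, |f x| ≤ 1)
    (hsign : ∀ x ∈ l, if P x then 0 ≤ f x else f x ≤ 0)
    (hg₀ : ∀ x ∈ l, 0 ≤ g x) (hg : ∀ x ∈ l, g x ≤ 1 - f x) {w : K} (hw : ∀ x ∈ l, w ≤ |f x|) :
    (l.map g).prod ≤ (1 - w) ^ (l.countP P - l.countP (!P ·)) := by
  induction l using List.reverseRecOn generalizing w with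
  | nil => simp
  | append_singleton l x ih =>
    simp only [List.mem_append, List.mem_singleton, or_imp, forall_and, forall_eq] at *
    have hcount := hl l (by simp)
    have hcount' := hl (l ++ [x]) List.prefix_rfl
    have hprod := ih (hl.of_isPrefix (by simp)) (List.pairwise_append.1 hanti).1 hf.1 hsign.1 hg₀.1
      hg.1 (w := |f x|) fun y hy => (List.pairwise_append.1 hanti).2.2 y hy x (by simp)
    have hx : 0 ≤ 1 - |f x| := sub_nonneg.2 hf.2
    have hmul : ((l ++ [x]).map g).prod ≤
        (1 - |f x|) ^ (l.countP P - l.countP (!P ·)) * (1 - f x) := by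
      simpa using mul_le_mul hprod hg.2 hg₀.2 (pow_nonneg hx _)
    have hpow : (1 - |f x|) ^ ((l ++ [x]).countP P - (l ++ [x]).countP (!P ·)) ≤
        (1 - w) ^ ((l ++ [x]).countP P - (l ++ [x]).countP (!P ·)) :=
      pow_le_pow_left₀ hx (by linarith [hw.2]) _
    refine (hmul.trans ?_).trans hpow
    cases hPx : P x
    · have hfx : f x ≤ 0 := by simpa [hPx] using hsign.2
      obtain ⟨k, hk⟩ : ∃ k, l.countP P - l.countP (!P ·) = k + 1 :=
        Nat.exists_eq_add_one.2 (by grind)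
      have hk' : (l ++ [x]).countP P - (l ++ [x]).countP (!P ·) = k := by grind
      rw [hk, hk', abs_of_nonpos hfx] at *
      calc (1 - -f x) ^ (k + 1) * (1 - f x) = (1 - -f x) ^ k * (1 - f x ^ 2) := by ring
        _ ≤ (1 - -f x) ^ k :=
          mul_le_of_le_one_right (pow_nonneg hx k) (sub_le_self _ (sq_nonneg _))
    · have hfx : 0 ≤ f x := by simpa [hPx] using hsign.2
      have hk : (l ++ [x]).countP P - (l ++ [x]).countP (!P ·) =
          l.countP P - l.countP (!P ·) + 1 := by grind
      rw [hk, pow_succ, abs_of_nonneg hfx]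

lemma IsBallot.prod_map_one_sub_mul_le_one {x : α → K} {c d : K} (hl : IsBallot P l)
    (hanti : l.Pairwise fun i j => |x j| ≤ |x i|)
    (hsign : ∀ i ∈ l, if P i then 0 ≤ x i else x i ≤ 0)
    (hd : d ≤ 0) (hcd : 0 ≤ c + d) (hxc : ∀ i ∈ l, |x i| * c ≤ 1) :
    (l.map fun i => (1 - x i * c) * (1 - x i * d)).prod ≤ 1 := by
  have hc : 0 ≤ c := by linarith
  have hxd : ∀ i ∈ l, |x i| * -d ≤ 1 := fun i hi =>
    (mul_le_mul_of_nonneg_left (by linarith) (abs_nonneg _)).trans (hxc i hi)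
  have hbound : ∀ i ∈ l, |x i * (c + d)| ≤ 1 := fun i hi => by
    rw [abs_mul, abs_of_nonneg hcd]
    exact (mul_le_mul_of_nonneg_left (by linarith) (abs_nonneg _)).trans (hxc i hi)
  have hnonneg : ∀ i ∈ l, 0 ≤ (1 - x i * c) * (1 - x i * d) := fun i hi =>
    mul_nonneg
      (sub_nonneg.2 ((mul_le_mul_of_nonneg_right (le_abs_self _) hc).trans (hxc i hi)))
      (by linarith [hxd i hi, mul_le_mul_of_nonneg_right (neg_abs_le (x i)) (neg_nonneg.2 hd)])
  have hle : ∀ i ∈ l, (1 - x i * c) * (1 - x i * d) ≤ 1 - x i * (c + d) := fun i _ => by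
    linear_combination
      mul_nonpos_of_nonneg_of_nonpos (sq_nonneg (x i)) (mul_nonpos_of_nonneg_of_nonpos hc hd)
  simpa using hl.prod_map_le_one_sub_pow (w := 0)
    (hanti.imp fun h => by
      simpa only [abs_mul] using mul_le_mul_of_nonneg_right h (abs_nonneg (c + d)))
    hbound
    (fun i hi => by
      have := hsign i hi
      split_ifs at this ⊢
      exacts [mul_nonneg this hcd, mul_nonpos_of_nonpos_of_nonneg this hcd])
    hnonneg hle fun i _ => abs_nonneg _

lemma one_add_mul_one_sub_mul_one_add_le_two {u w : K} (hu : u ∈ Set.Icc 0 1)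
    (hw : w ∈ Set.Icc 0 1) : (1 + u) * ((1 - u * w) * (1 + w)) ≤ 2 := by
  have huw : u * w ≤ 1 := mul_le_one₀ hu.2 hw.1 hw.2
  have hsum : (1 + u) * (1 + w) ≤ 2 * (1 + u * w) := by
    linarith [mul_nonneg (sub_nonneg.2 hu.2) (sub_nonneg.2 hw.2)]
  calc (1 + u) * ((1 - u * w) * (1 + w)) = (1 + u) * (1 + w) * (1 - u * w) := by ring
    _ ≤ 2 * (1 + u * w) * (1 - u * w) := mul_le_mul_of_nonneg_right hsum (sub_nonneg.2 huw)
    _ = 2 - 2 * (u * w) ^ 2 := by ring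
    _ ≤ 2 := sub_le_self _ (by positivity)

end BallotProduct

section Sign

variable {K : Type*} [AddCommGroup K] [LinearOrder K]

/-- The sign of a nonzero element as a Boolean, so that `IsBallot isPos` and its negated version
compare the positive and the negative entries of a list without zeros. -/
abbrev isPos (x : K) : Bool := decide (0 < x)

/-- The exponent `min(p, m)` of a list without zeros, which has `p` positive and `m` negative
entries. -/
def minSignCount (l : List K) : ℕ :=
  min (l.countP isPos) (l.countP (!isPos ·))

lemma minSignCount_append_singleton {a : K} (ha : 0 < a) (l : List K) :
    minSignCount l ≤ minSignCount (l ++ [a]) := by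
  simp [minSignCount, ha]

lemma minSignCount_append_cons_cons {a b : K} (ha : 0 < a) (hb : b < 0) (L R : List K) :
    minSignCount (L ++ a :: b :: R) = minSignCount (L ++ R) + 1 := by
  simp only [minSignCount, List.countP_append, List.countP_cons]
  grind

lemma minSignCount_map_neg [IsOrderedAddMonoid K] {l : List K} (h₀ : 0 ∉ l) :
    minSignCount (l.map (-·)) = minSignCount l := by
  have hsign : ∀ x ∈ l, isPos (-x) = !isPos x := fun x hx => by
    rcases (ne_of_mem_of_not_mem hx h₀).lt_or_gt with h | h <;> simp [isPos, h, h.not_gt]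
  have hneg : (l.map (-·)).countP isPos = l.countP (!isPos ·) := by
    rw [List.countP_map]
    exact List.countP_congr fun x hx => by rw [Function.comp_apply, hsign x hx]
  have hpos : (l.map (-·)).countP (!isPos ·) = l.countP isPos := by
    rw [List.countP_map]
    exact List.countP_congr fun x hx => by rw [Function.comp_apply, hsign x hx, Bool.not_not]
  rw [minSignCount, hneg, hpos, min_comm, minSignCount]

end Sign

section PairProd

variable {K : Type*} [Field K]

/-- The product `P_n(y_1, …, y_n)` of the factors `1 - y_i / y_j` with `i < j`, for the list
`[y_1, …, y_n]`. -/
def pairProd : List K → K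
  | [] => 1
  | a :: l => (l.map fun b => 1 - a / b).prod * pairProd l

lemma pairProd_append (L R : List K) :
    pairProd (L ++ R) =
      pairProd L * pairProd R * (R.map fun b => (L.map fun x => 1 - x / b).prod).prod := by
  induction L with
  | nil => simp [pairProd]
  | cons a L ih =>
    simp only [List.cons_append, pairProd, ih, List.map_append, List.prod_append, List.map_cons,
      List.prod_cons, List.prod_map_mul]
    ring

lemma pairProd_append_singleton (L : List K) (a : K) :
    pairProd (L ++ [a]) = pairProd L * (L.map fun x => 1 - x / a).prod := by
  simp [pairProd_append, pairProd]

lemma pairProd_append_cons_cons (L R : List K) (a b : K) :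
    pairProd (L ++ a :: b :: R) = pairProd (L ++ R) *
      ((1 - a / b) * (R.map fun x => (1 - a / x) * (1 - b / x)).prod) *
      (L.map fun x => (1 - x / a) * (1 - x / b)).prod := by
  simp only [pairProd_append, pairProd, List.map_cons, List.prod_cons, List.prod_map_mul]
  ring

lemma pairProd_map_neg (l : List K) : pairProd (l.map (-·)) = pairProd l := by
  induction l with
  | nil => rfl
  | cons a l ih => simp [pairProd, ih, List.map_map, Function.comp_def]

variable [LinearOrder K] [IsStrictOrderedRing K]

lemma one_sub_div_nonneg {x y : K} (h : |x| ≤ |y|) : 0 ≤ 1 - x / y := by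
  refine sub_nonneg.2 ((le_abs_self _).trans ?_)
  rw [abs_div]
  exact div_le_one_of_le₀ h (abs_nonneg y)

lemma pairProd_nonneg {l : List K} (hl : l.Pairwise (|·| ≤ |·|)) : 0 ≤ pairProd l := by
  induction l with
  | nil => exact zero_le_one
  | cons a l ih =>
    rw [List.pairwise_cons] at hl
    exact mul_nonneg (List.prod_nonneg (by simpa using fun b hb => one_sub_div_nonneg (hl.1 b hb)))
      (ih hl.2)

lemma prod_one_sub_div_mul_one_sub_mul_le_one {L : List K} {a d : K} (ha : 0 < a)
    (hd : d ≤ 0) (had : 0 ≤ a⁻¹ + d) (hL : L.Pairwise (|·| ≤ |·|)) (hLa : ∀ x ∈ L, |x| ≤ |a|)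
    (hballot : IsBallot isPos L.reverse) :
    (L.map fun x => (1 - x / a) * (1 - x * d)).prod ≤ 1 := by
  have := hballot.prod_map_one_sub_mul_le_one (x := fun x => x) (List.pairwise_reverse.2 hL)
    (fun x _ => by
      by_cases hx : 0 < x
      · simp [hx, hx.le]
      · simp [hx, not_lt.1 hx])
    hd had
    (fun x hx => by
      rw [← div_eq_mul_inv, div_le_one ha, ← abs_of_pos ha]
      exact hLa x (List.mem_reverse.1 hx))
  simpa only [List.map_reverse, List.prod_reverse, div_eq_mul_inv] using this

lemma prod_one_sub_div_mul_one_sub_div_le_one {R : List K} {a b : K} (ha : 0 < a) (hab : a ≤ -b)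
    (hR : R.Pairwise (|·| ≤ |·|)) (hbR : ∀ x ∈ R, |b| ≤ |x|)
    (hballot : IsBallot (fun x => !isPos x) R) :
    (R.map fun x => (1 - a / x) * (1 - b / x)).prod ≤ 1 := by
  have hb : b < 0 := by linarith
  have hpos : ∀ x ∈ R, 0 < |x| := fun x hx => (abs_pos.2 hb.ne).trans_le (hbR x hx)
  have := hballot.prod_map_one_sub_mul_le_one (x := fun x => -x⁻¹) (c := -b) (d := -a)
    (hR.imp_of_mem fun {x z} hx _ hxz => by
      simpa only [abs_neg, abs_inv] using inv_anti₀ (hpos x hx) hxz)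
    (fun x _ => by
      by_cases hx : 0 < x
      · simp [hx, hx.le]
      · simp [hx, not_lt.1 hx])
    (by linarith) (by linarith)
    (fun x hx => by
      rw [abs_neg, abs_inv, ← abs_of_neg hb, inv_mul_le_one₀ (hpos x hx)]
      exact hbR x hx)
  refine le_of_eq_of_le (congrArg List.prod (List.map_congr_left fun x _ => ?_)) this
  ring

lemma one_sub_div_mul_mul_le_two {a b x : K} (ha : 0 < a) (hab : a ≤ -b)
    (hx : 0 < x) (hbx : -b ≤ x) : (1 - a / b) * ((1 - a / x) * (1 - b / x)) ≤ 2 := by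
  have hb : 0 < -b := ha.trans_le hab
  have hu : a / -b ∈ Set.Icc 0 1 := ⟨by positivity, div_le_one_of_le₀ hab hb.le⟩
  have hw : -b / x ∈ Set.Icc 0 1 := ⟨by positivity, div_le_one_of_le₀ hbx hx.le⟩
  have huw : a / -b * (-b / x) = a / x := div_mul_div_cancel₀ hb.ne'
  have := one_add_mul_one_sub_mul_one_add_le_two hu hw
  rw [huw] at this
  simpa only [div_neg, neg_div, ← sub_eq_add_neg] using this

lemma one_sub_div_mul_prod_le_two {R : List K} {a b : K} (ha : 0 < a) (hab : a ≤ -b)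
    (hR : R.Pairwise (|·| ≤ |·|)) (hbR : ∀ x ∈ R, |b| ≤ |x|)
    (hballot : IsBallot (fun x => !isPos x) (b :: R)) :
    (1 - a / b) * (R.map fun x => (1 - a / x) * (1 - b / x)).prod ≤ 2 := by
  have hb : b < 0 := by linarith
  have hab' : |a| ≤ |b| := by rwa [abs_of_pos ha, abs_of_neg hb]
  have hfactor : ∀ x ∈ R, 0 ≤ (1 - a / x) * (1 - b / x) := fun x hx =>
    mul_nonneg (one_sub_div_nonneg (hab'.trans (hbR x hx))) (one_sub_div_nonneg (hbR x hx))
  rcases hballot.tail_or_exists_eq_append with hballot | ⟨A, x, B, rfl, hx, -, hA, hB⟩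
  · calc (1 - a / b) * (R.map fun x => (1 - a / x) * (1 - b / x)).prod
        ≤ 1 - a / b := mul_le_of_le_one_right (one_sub_div_nonneg hab')
          (prod_one_sub_div_mul_one_sub_div_le_one ha hab hR hbR hballot)
      _ ≤ 2 := by
        have : a / -b ≤ 1 := div_le_one_of_le₀ hab (by linarith)
        rw [div_neg] at this
        linarith
  · have hx : 0 < x := by simpa using hx
    have hbx : -b ≤ x := by simpa [abs_of_neg hb, abs_of_pos hx] using hbR x (by simp)
    simp only [List.mem_append, List.mem_cons, or_imp, forall_and, forall_eq] at hbR hfactor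
    obtain ⟨hRA, hRB, -⟩ := List.pairwise_append.1 hR
    have hAB := mul_le_one₀ (prod_one_sub_div_mul_one_sub_div_le_one ha hab hRA hbR.1 hA)
      (List.prod_nonneg (by simpa using hfactor.2.2))
      (prod_one_sub_div_mul_one_sub_div_le_one ha hab (List.pairwise_cons.1 hRB).2 hbR.2.2 hB)
    rw [List.map_append, List.prod_append, List.map_cons, List.prod_cons,
      mul_left_comm (_ : K) _ (List.prod _), ← mul_assoc]
    exact (mul_le_of_le_one_right (mul_nonneg (one_sub_div_nonneg hab') hfactor.2.1) hAB).trans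
      (one_sub_div_mul_mul_le_two ha hab hx hbx)

lemma pairProd_append_singleton_le {L : List K} {a : K} (ha : 0 < a)
    (hLa : (L ++ [a]).Pairwise (|·| ≤ |·|)) (hballot : IsBallot isPos L.reverse) :
    pairProd (L ++ [a]) ≤ pairProd L := by
  obtain ⟨hL, -, hLa⟩ := List.pairwise_append.1 hLa
  rw [pairProd_append_singleton]
  refine mul_le_of_le_one_right (pairProd_nonneg hL) ?_
  simpa using prod_one_sub_div_mul_one_sub_mul_le_one ha le_rfl (by simpa using ha.le) hL
    (fun x hx => hLa x hx a (by simp)) hballot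

lemma pairProd_append_cons_cons_le {L R : List K} {a b : K} (ha : 0 < a) (hb : b < 0)
    (h : (L ++ a :: b :: R).Pairwise (|·| ≤ |·|)) (hL : IsBallot isPos L.reverse)
    (hR : IsBallot (fun x => !isPos x) (b :: R)) :
    pairProd (L ++ a :: b :: R) ≤ pairProd (L ++ R) * 2 := by
  have hLR : 0 ≤ pairProd (L ++ R) := pairProd_nonneg <| h.sublist <|
    List.Sublist.append_left (by simp) _
  simp only [List.pairwise_append, List.pairwise_cons] at h
  obtain ⟨hLpair, ⟨ha_le, hb_le, hRpair⟩, hcross⟩ := h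
  have hab : a ≤ -b := by simpa only [abs_of_pos ha, abs_of_neg hb] using ha_le b (by simp)
  have hinv : 0 ≤ a⁻¹ + b⁻¹ := by
    have := inv_anti₀ ha hab
    rw [inv_neg] at this
    linarith
  have hleft : (L.map fun x => (1 - x / a) * (1 - x / b)).prod ≤ 1 := by
    simpa only [← div_eq_mul_inv] using prod_one_sub_div_mul_one_sub_mul_le_one ha
      (inv_nonpos.2 hb.le) hinv hLpair (fun x hx => hcross x hx a (by simp)) hL
  have hleft₀ : 0 ≤ (L.map fun x => (1 - x / a) * (1 - x / b)).prod :=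
    List.prod_nonneg <| by
      simpa using fun x hx => mul_nonneg (one_sub_div_nonneg (hcross x hx a (by simp)))
        (one_sub_div_nonneg (hcross x hx b (by simp)))
  rw [pairProd_append_cons_cons]
  have hright := one_sub_div_mul_prod_le_two ha hab hRpair hb_le hR
  simpa only [mul_one] using
    mul_le_mul (mul_le_mul_of_nonneg_left hright hLR) hleft hleft₀ (by positivity)

theorem pairProd_le_two_pow_minSignCount {l : List K} (h₀ : 0 ∉ l)
    (hl : l.Pairwise (|·| ≤ |·|)) : pairProd l ≤ 2 ^ minSignCount l := by
  induction hn : l.length using Nat.strong_induction_on generalizing l with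
  | _ n ih =>
  subst hn
  rcases l with _ | ⟨x, l⟩
  · simp [pairProd, minSignCount]
  wlog hx : 0 < x generalizing x l with of_pos
  · have hx₀ : x ≠ 0 := by rintro rfl; simp at h₀
    have hneg := of_pos (-x) (l.map (-·)) (by simpa [eq_comm] using h₀)
      (by rw [← List.map_cons (f := (-·)), List.pairwise_map]; simpa only [abs_neg] using hl)
      (by simpa using ih) (neg_pos.2 (lt_of_le_of_ne (not_lt.1 hx) hx₀))
    rwa [← List.map_cons (f := (-·)), pairProd_map_neg, minSignCount_map_neg h₀] at hneg
  obtain ⟨L, a, R, hLaR, ha, hL, hR⟩ := exists_peak (P := isPos) (by simpa using hx) l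
  rw [hLaR] at h₀ hl ih ⊢
  replace ha : 0 < a := by simpa using ha
  rcases R with _ | ⟨b, R⟩
  · calc pairProd (L ++ [a]) ≤ pairProd L := pairProd_append_singleton_le ha hl hL
      _ ≤ 2 ^ minSignCount L :=
        ih _ (by simp) (fun h => h₀ (by simp [h])) (List.pairwise_append.1 hl).1 rfl
      _ ≤ 2 ^ minSignCount (L ++ [a]) :=
        pow_le_pow_right₀ one_le_two (minSignCount_append_singleton ha L)
  · have hb₀ : b ≠ 0 := by rintro rfl; simp at h₀
    have hb : b < 0 := lt_of_le_of_ne (by simpa using hR.head) hb₀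
    have hsub : (L ++ R).Sublist (L ++ a :: b :: R) := List.Sublist.append_left (by simp) _
    calc pairProd (L ++ a :: b :: R) ≤ pairProd (L ++ R) * 2 :=
          pairProd_append_cons_cons_le ha hb hl hL hR
      _ ≤ 2 ^ minSignCount (L ++ R) * 2 := by
        gcongr
        exact ih _ (by simp) (fun h => h₀ (hsub.subset h)) (hl.sublist hsub) rfl
      _ = 2 ^ minSignCount (L ++ a :: b :: R) := by
        rw [minSignCount_append_cons_cons ha hb, pow_succ]

end PairProd

section FinsetProduct

variable {ι K : Type*}

lemma filter_not_pos_eq_filter_neg [Zero K] [LinearOrder K] {s : Finset ι} {y : ι → K}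
    (hy : ∀ i ∈ s, y i ≠ 0) : {i ∈ s | ¬0 < y i} = {i ∈ s | y i < 0} :=
  filter_congr fun i hi => by rw [not_lt, (hy i hi).le_iff_lt]

lemma card_filter_neg [Zero K] [LinearOrder K] {s : Finset ι} {y : ι → K}
    (hy : ∀ i ∈ s, y i ≠ 0) : #{i ∈ s | y i < 0} = #s - #{i ∈ s | 0 < y i} := by
  rw [← filter_not_pos_eq_filter_neg hy]
  exact Nat.eq_sub_of_add_eq' (card_filter_add_card_filter_not _)

variable [LinearOrder ι]

lemma pairProd_map_sort [Field K] (s : Finset ι) (y : ι → K) :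
    pairProd (s.sort.map y) =
      ∏ q ∈ (s ×ˢ s).filter (fun q => q.1 < q.2), (1 - y q.1 / y q.2) := by
  rw [Finset.prod_filter, Finset.prod_product]
  induction s using Finset.induction_on_min with
  | empty => simp [pairProd]
  | insert a s ha ih =>
    have ha' : a ∉ s := fun h => (ha a h).false
    have hrow : ∏ j ∈ insert a s, (if a < j then 1 - y a / y j else 1) =
        ((s.sort.map y).map fun b => 1 - y a / b).prod := by
      rw [Finset.prod_insert ha', if_neg (lt_irrefl a), one_mul, List.map_map,
        ← List.prod_toFinset _ (s.sort_nodup _), Finset.sort_toFinset]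
      exact Finset.prod_congr rfl fun j hj => if_pos (ha j hj)
    have hcol : ∀ i ∈ s, ∏ j ∈ insert a s, (if i < j then 1 - y i / y j else 1) =
        ∏ j ∈ s, (if i < j then 1 - y i / y j else 1) := fun i hi => by
      rw [Finset.prod_insert ha', if_neg (ha i hi).not_gt, one_mul]
    rw [Finset.prod_insert ha', hrow, Finset.prod_congr rfl hcol, ← ih,
      Finset.sort_insert (r := (· ≤ ·)) (fun b hb => (ha b hb).le) ha', List.map_cons, pairProd]

lemma countP_map_sort (s : Finset ι) (y : ι → K) (P : K → Bool) :
    (s.sort.map y).countP P = #{i ∈ s | P (y i)} := by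
  rw [Finset.card_def, Finset.filter_val, ← Multiset.countP_eq_card_filter,
    ← Finset.sort_eq s (· ≤ ·), Multiset.coe_countP, List.countP_map]
  simp only [Bool.decide_eq_true]
  rfl

theorem pohst_refined_general [Field K] [LinearOrder K] [IsStrictOrderedRing K]
    (s : Finset ι) (y : ι → K) (hy : ∀ i ∈ s, y i ≠ 0) (hmono : MonotoneOn (fun i => |y i|) s) :
    ∏ q ∈ (s ×ˢ s).filter (fun q => q.1 < q.2), (1 - y q.1 / y q.2) ≤
      2 ^ min #{i ∈ s | 0 < y i} #{i ∈ s | y i < 0} := by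
  have hpairwise : (s.sort.map y).Pairwise (|·| ≤ |·|) := by
    rw [List.pairwise_map]
    exact (s.pairwise_sort (· ≤ ·)).imp_of_mem fun hi hj hij =>
      hmono (by simpa using hi) (by simpa using hj) hij
  have hpos : (s.sort.map y).countP isPos = #{i ∈ s | 0 < y i} := by
    simp only [countP_map_sort, decide_eq_true_eq]
  have hneg : (s.sort.map y).countP (!isPos ·) = #{i ∈ s | y i < 0} := by
    rw [countP_map_sort, ← filter_not_pos_eq_filter_neg hy]
    simp only [Bool.not_eq_true', decide_eq_false_iff_not]
  rw [← pairProd_map_sort, ← hpos, ← hneg]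
  exact pairProd_le_two_pow_minSignCount (by simpa using hy) hpairwise

end FinsetProduct

lemma monotoneOn_Icc_of_le_add_one {α : Type*} [Preorder α] {f : ℕ → α} {k n : ℕ}
    (hf : ∀ i, k ≤ i → i ≤ n - 1 → f i ≤ f (i + 1)) : MonotoneOn f (Set.Icc k n) :=
  monotoneOn_of_le_add_one Set.ordConnected_Icc fun i _ hi hi' =>
    hf i hi.1 (Nat.le_sub_one_of_lt hi'.2)

theorem pohst_refined (n : ℕ) (hn : 2 ≤ n) (y : ℕ → ℝ)
    (hy : ∀ i ∈ Finset.Icc 1 n, y i ≠ 0)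
    (hmono : ∀ i, 1 ≤ i → i ≤ n - 1 → |y i| < |y (i + 1)|)
    (p m : ℕ)
    (hp : p = ((Finset.Icc 1 n).filter (fun i => 0 < y i)).card)
    (hm : m = n - p) :
    ∏ q ∈ (Finset.Icc 1 n ×ˢ Finset.Icc 1 n).filter (fun q => q.1 < q.2),
        (1 - y q.1 / y q.2) ≤ 2 ^ min p m := by
  simpa [hm, hp, card_filter_neg hy] using pohst_refined_general _ y hy <| by
    simpa using monotoneOn_Icc_of_le_add_one fun i hi hin => (hmono i hi hin).le
end

section
/- Let n ≥ 1 and let v = (x_1, …, x_n) with each x_i ∈ [−1, 1] and x_i ≠ 0. Then f_n(v) := ∏_{1 ≤ i ≤ j ≤ n} (1 − ∏_{k=i}^{j} x_k) ≤ 2^{⌊(n+1)/2⌋}, where ⌊·⌋ denotes the floor function. -/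
open Finset

/-!
Put `z j = (x 1 * ⋯ * x j)⁻¹` for `0 ≤ j ≤ n`. Then `|z 0| ≤ ⋯ ≤ |z n|`, and the product is that of
`1 - z i / z j` over all `i < j`. Read the signs of the `z j` as a walk with steps `±1`. Replacing
`z` by `-z` if necessary, let the walk start with a positive step, let `a > 0` be the step at which
it first reaches its maximum, and `b < 0` the step after it, if there is one. An entry of sign
opposite to the nearer of `a` and `b` shares with this pair factors whose product may exceed `1`.
By maximality, reading away from the pair, each such entry can be matched with an entry nearer to
the pair which compensates it; only one entry beyond `b` may stay unmatched, and it contributes at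
most `2 / (1 - a / b)`. So all factors involving `a` or `b` contribute at most `2` together, and at
most `1` if `a` is the last entry. Remove `a` and `b` and induct on the length.
-/

namespace Pohst

theorem exists_first_max_prefix_sum {α G : Type*} [AddCommGroup G] [LinearOrder G]
    [IsOrderedAddMonoid G] (f : α → G) {l : List α} (hl : ∃ p, p <+: l ∧ 0 < (p.map f).sum) :
    ∃ A a B, l = A ++ a :: B ∧ (∀ p, p <+: A → (p.map f).sum < (A.map f).sum + f a) ∧
      ∀ p, p <+: l → (p.map f).sum ≤ (A.map f).sum + f a := by
  induction l with
  | nil => simp at hl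
  | cons z l ih =>
    obtain ⟨q, hq, hq_pos⟩ : ∃ q, q <+: l ∧ 0 < f z + (q.map f).sum := by
      obtain ⟨p, hp, hp_pos⟩ := hl
      rcases List.prefix_cons_iff.1 hp with rfl | ⟨q, rfl, hq⟩
      · simp at hp_pos
      · exact ⟨q, hq, by simpa using hp_pos⟩
    by_cases h : ∃ p, p <+: l ∧ 0 < (p.map f).sum
    · obtain ⟨A, a, B, rfl, hA, hmax⟩ := ih h
      have h_pos : 0 < f z + ((A.map f).sum + f a) := hq_pos.trans_le (by grw [hmax q hq])
      refine ⟨z :: A, a, B, rfl, fun p hp ↦ ?_, fun p hp ↦ ?_⟩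
      · rcases List.prefix_cons_iff.1 hp with rfl | ⟨q, rfl, hq⟩
        · simpa [add_assoc] using h_pos
        · simpa [add_assoc] using hA q hq
      · rcases List.prefix_cons_iff.1 hp with rfl | ⟨q, rfl, hq⟩
        · simpa [add_assoc] using h_pos.le
        · simpa [add_assoc] using hmax q hq
    · push Not at h
      have hz : 0 < f z := hq_pos.trans_le (add_le_of_nonpos_right (h q hq))
      refine ⟨[], z, l, rfl, by simpa using hz, fun p hp ↦ ?_⟩
      rcases List.prefix_cons_iff.1 hp with rfl | ⟨q, rfl, hq⟩
      · simpa using hz.le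
      · simpa using h q hq

section SignSum

variable {α : Type*} [Zero α] [LinearOrder α]

/-- The number of positive entries of a list minus the number of its negative entries. -/
def signSum (l : List α) : ℤ := (l.map fun z ↦ (SignType.sign z : ℤ)).sum

@[simp] theorem signSum_nil : signSum ([] : List α) = 0 := rfl

@[simp] theorem signSum_cons (z : α) (l : List α) :
    signSum (z :: l) = SignType.sign z + signSum l := by
  simp [signSum]

@[simp] theorem signSum_append (l m : List α) : signSum (l ++ m) = signSum l + signSum m := by
  simp [signSum]

@[simp] theorem signSum_reverse (l : List α) : signSum l.reverse = signSum l := by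
  simp [signSum, List.sum_reverse]

theorem exists_append_cons_of_head_pos {z : α} (hz : 0 < z) (l : List α) :
    ∃ A a B, z :: l = A ++ a :: B ∧ 0 < a ∧ (∀ s, s <:+ A → 0 ≤ signSum s) ∧
      ∀ p, p <+: B → signSum p ≤ 0 := by
  obtain ⟨A, a, B, h_eq, hA, hmax⟩ : ∃ A a B, z :: l = A ++ a :: B ∧
      (∀ p, p <+: A → signSum p < signSum A + SignType.sign a) ∧
      ∀ p, p <+: z :: l → signSum p ≤ signSum A + SignType.sign a :=
    exists_first_max_prefix_sum _ ⟨[z], by simp, by simp [hz]⟩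
  have ha : 0 < a := by
    by_contra ha
    have := hA A List.prefix_rfl
    rcases (not_lt.1 ha).lt_or_eq with ha | rfl <;> simp_all
  refine ⟨A, a, B, h_eq, ha, ?_, ?_⟩
  · rintro s ⟨p, rfl⟩
    have := hA p (List.prefix_append p s)
    simp only [signSum_append, sign_pos ha, SignType.coe_one] at this
    lia
  · intro p hp
    have := hmax (A ++ a :: p) (by simpa [h_eq] using hp)
    simp only [signSum_append, signSum_cons] at this
    lia

end SignSum

variable {R : Type*} [CommRing R]

/-- When a pair `a > 0 > b` with `|a| ≤ |b|` is removed from the list, the two factors it shares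
with another entry `z` combine to `weight r y`, where `r = -a / b`, and `y = z / a` or `y = b / z`
according as `z` stands before or after the pair. -/
def weight (r y : R) : R := (1 - y) * (1 + r * y)

variable [LinearOrder R] [IsStrictOrderedRing R]

section Weight

variable {r : R} (hr₀ : 0 ≤ r) (hr₁ : r ≤ 1)
include hr₀ hr₁

theorem weight_nonneg {y : R} (hy : |y| ≤ 1) : 0 ≤ weight r y := by
  have hry : |r * y| ≤ 1 := by
    rw [abs_mul, abs_of_nonneg hr₀]
    exact mul_le_one₀ hr₁ (abs_nonneg y) hy
  exact mul_nonneg (by linarith [le_of_abs_le hy]) (by linarith [neg_le_of_abs_le hry])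

theorem weight_antitoneOn : AntitoneOn (weight r) (Set.Ici 0) := by
  intro s (hs : 0 ≤ s) t _ hst
  have h₁ : 0 ≤ (t - s) * (1 - r) := mul_nonneg (sub_nonneg.2 hst) (sub_nonneg.2 hr₁)
  have h₂ : 0 ≤ (t - s) * (r * (t + s)) :=
    mul_nonneg (sub_nonneg.2 hst) (mul_nonneg hr₀ (add_nonneg (hs.trans hst) hs))
  simp only [weight]
  linear_combination h₁ + h₂

theorem weight_mul_weight_neg_le_one {t : R} (ht : |t| ≤ 1) : weight r t * weight r (-t) ≤ 1 := by
  have ht2 : t ^ 2 ≤ 1 := (sq_le_one_iff_abs_le_one t).2 ht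
  calc weight r t * weight r (-t) = (1 - t ^ 2) * (1 - (r * t) ^ 2) := by simp only [weight]; ring
    _ ≤ 1 := by
      refine mul_le_one₀ (by linarith [sq_nonneg t]) ?_ (by linarith [sq_nonneg (r * t)])
      rw [mul_pow]
      exact sub_nonneg.2 (mul_le_one₀ (pow_le_one₀ hr₀ hr₁) (sq_nonneg t) ht2)

end Weight

theorem one_add_mul_weight_neg_le_two {r t : R} (hr₁ : r ≤ 1) (ht₀ : 0 ≤ t) (ht₁ : t ≤ 1) :
    (1 + r) * weight r (-t) ≤ 2 := by
  have hrt : r * t ≤ 1 := mul_le_one₀ hr₁ ht₀ ht₁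
  have h : (1 + r) * (1 + t) ≤ 2 * (1 + r * t) := by
    linear_combination mul_nonneg (sub_nonneg.2 hr₁) (sub_nonneg.2 ht₁)
  calc (1 + r) * weight r (-t) = (1 + r) * (1 + t) * (1 - r * t) := by simp only [weight]; ring
    _ ≤ 2 * (1 + r * t) * (1 - r * t) := by gcongr
    _ ≤ 2 := by linear_combination 2 * sq_nonneg (r * t)

/-- Weight functions on `[-1, 1]` for which the product over a list of decreasing moduli can be
bounded by matching every negative entry with an earlier positive one: a matched pair contributes
at most `1`, and an unmatched negative entry contributes at most `M`. -/
structure IsBallotWeight (φ : R → R) (M : R) : Prop where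
  map_zero : φ 0 = 1
  nonneg {y : R} : |y| ≤ 1 → 0 ≤ φ y
  antitoneOn : AntitoneOn φ (Set.Icc 0 1)
  mul_neg_le_one {t : R} : t ∈ Set.Icc 0 1 → φ t * φ (-t) ≤ 1
  neg_le {t : R} : t ∈ Set.Icc 0 1 → φ (-t) ≤ M

namespace IsBallotWeight

variable {φ : R → R} {M : R} (hφ : IsBallotWeight φ M)
include hφ

theorem one_le : 1 ≤ M := by
  simpa [hφ.map_zero] using hφ.neg_le (t := 0) (by simp)

theorem prod_nonneg {l : List R} (hl : ∀ y ∈ l, |y| ≤ 1) : 0 ≤ (l.map φ).prod :=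
  List.prod_nonneg <| List.forall_mem_map.2 fun y hy ↦ hφ.nonneg (hl y hy)

theorem pow_le_pow {s t : R} (hs : 0 ≤ s) (hst : s ≤ t) (ht : t ≤ 1) (c : ℕ) :
    φ t ^ c ≤ φ s ^ c :=
  have ht₀ : 0 ≤ t := hs.trans hst
  pow_le_pow_left₀ (hφ.nonneg (by rwa [abs_of_nonneg ht₀]))
    (hφ.antitoneOn ⟨hs, hst.trans ht⟩ ⟨ht₀, ht⟩ hst) c

theorem mul_mul_pow_le_of_neg {y P : R} (hy : y < 0) (hy₁ : |y| ≤ 1) (hP : 0 ≤ P) {c d : ℕ}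
    (hcd : 0 < c + d)
    (hle : ∀ c' d' : ℕ, (c' + d' : ℤ) = c + d - 1 → P * φ |y| ^ c' ≤ M ^ d') :
    φ y * P * φ |y| ^ c ≤ M ^ d := by
  have hy_mem : |y| ∈ Set.Icc 0 1 := ⟨abs_nonneg y, hy₁⟩
  have hy_eq : y = -|y| := by simp [abs_of_neg hy]
  rcases c with _ | c
  · obtain ⟨d, rfl⟩ := Nat.exists_eq_add_one.2 (Nat.zero_add d ▸ hcd)
    have hφy : φ y ≤ M := by rw [hy_eq]; exact hφ.neg_le hy_mem
    calc φ y * P * φ |y| ^ 0 = φ y * (P * φ |y| ^ 0) := mul_assoc ..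
      _ ≤ M * M ^ d :=
        mul_le_mul hφy (hle 0 d (by simp)) (by simpa) (zero_le_one.trans hφ.one_le)
      _ = M ^ (d + 1) := (pow_succ' M d).symm
  · have h_pair : φ |y| * φ y ≤ 1 := by
      conv_lhs => rw [hy_eq, abs_neg, abs_abs]
      exact hφ.mul_neg_le_one hy_mem
    calc φ y * P * φ |y| ^ (c + 1) = φ |y| * φ y * (P * φ |y| ^ c) := by ring
      _ ≤ P * φ |y| ^ c :=
        mul_le_of_le_one_left (mul_nonneg hP (pow_nonneg (hφ.nonneg (by simpa)) c)) h_pair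
      _ ≤ M ^ d := hle c d (by push_cast; ring)

/-- `c` counts the positive entries read so far and still unmatched; each has modulus at least `T`,
hence weight at most `φ T`. -/
theorem prod_mul_pow_le_pow {T : R} (hT₀ : 0 ≤ T) (hT₁ : T ≤ 1) {l : List R}
    (hl : l.Pairwise fun y z ↦ |z| ≤ |y|) (hlT : ∀ y ∈ l, |y| ≤ T) {c d : ℕ}
    (h_sum : ∀ p, p <+: l → 0 ≤ c + d + signSum p) :
    (l.map φ).prod * φ T ^ c ≤ M ^ d := by
  induction l generalizing T c d with
  | nil =>
    calc (List.map φ []).prod * φ T ^ c = φ T ^ c := one_mul _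
      _ ≤ φ 0 ^ c := hφ.pow_le_pow le_rfl hT₀ hT₁ c
      _ = 1 := by rw [hφ.map_zero, one_pow]
      _ ≤ M ^ d := one_le_pow₀ hφ.one_le
  | cons y l ih =>
    obtain ⟨hy, hl⟩ := List.pairwise_cons.1 hl
    have hyT : |y| ≤ T := hlT y List.mem_cons_self
    have hy₁ : |y| ≤ 1 := hyT.trans hT₁
    have h_sum_cons (p) (hp : p <+: l) : 0 ≤ (c + d + SignType.sign y : ℤ) + signSum p := by
      simpa [add_assoc] using h_sum (y :: p) (by simpa using hp)
    have ih_l {c' d' : ℕ} (h : (c' + d' : ℤ) = c + d + SignType.sign y) :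
        (l.map φ).prod * φ |y| ^ c' ≤ M ^ d' :=
      ih (abs_nonneg y) hy₁ hl hy fun p hp ↦ h ▸ h_sum_cons p hp
    have h_prod : 0 ≤ (l.map φ).prod := hφ.prod_nonneg fun z hz ↦ (hy z hz).trans hy₁
    rw [List.map_cons, List.prod_cons]
    calc φ y * (l.map φ).prod * φ T ^ c ≤ φ y * (l.map φ).prod * φ |y| ^ c :=
          mul_le_mul_of_nonneg_left (hφ.pow_le_pow (abs_nonneg y) hyT hT₁ c)
            (mul_nonneg (hφ.nonneg hy₁) h_prod)
      _ ≤ M ^ d := by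
        rcases lt_trichotomy y 0 with hy₀ | rfl | hy₀
        · refine hφ.mul_mul_pow_le_of_neg hy₀ hy₁ h_prod ?_ fun c' d' h ↦ ih_l ?_
          · have := h_sum_cons [] List.nil_prefix
            simp only [sign_neg hy₀, SignType.coe_neg_one, signSum_nil] at this
            lia
          · simpa [hy₀, sub_eq_add_neg] using h
        · simpa [hφ.map_zero] using ih_l (c' := c) (d' := d) (by simp)
        · have := ih_l (c' := c + 1) (d' := d)
            (by rw [sign_pos hy₀, SignType.coe_one]; push_cast; ring)
          rw [abs_of_pos hy₀] at this ⊢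
          exact le_of_eq_of_le (by ring) this

theorem prod_le_pow {l : List R} (hl : l.Pairwise fun y z ↦ |z| ≤ |y|) (hl₁ : ∀ y ∈ l, |y| ≤ 1)
    {d : ℕ} (h_sum : ∀ p, p <+: l → 0 ≤ d + signSum p) : (l.map φ).prod ≤ M ^ d := by
  simpa using hφ.prod_mul_pow_le_pow zero_le_one le_rfl hl hl₁ (c := 0) (by simpa using h_sum)

end IsBallotWeight

variable {K : Type*} [Field K] [LinearOrder K] [IsStrictOrderedRing K]

theorem signSum_map_div_of_pos {a : K} (ha : 0 < a) (l : List K) :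
    signSum (l.map (· / a)) = signSum l := by
  induction l with
  | nil => rfl
  | cons z l ih =>
    have : SignType.sign (z / a) = SignType.sign z := by
      rw [div_eq_mul_inv, sign_mul, sign_pos (inv_pos.2 ha), mul_one]
    simp [ih, this]

theorem signSum_map_div_of_neg {b : K} (hb : b < 0) (l : List K) :
    signSum (l.map (b / ·)) = -signSum l := by
  induction l with
  | nil => rfl
  | cons z l ih =>
    have : SignType.sign (b / z) = -SignType.sign z := by
      rcases lt_trichotomy z 0 with hz | rfl | hz
      · simp [hz, div_pos_of_neg_of_neg hb hz]
      · simp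
      · simp [hz, div_neg_of_neg_of_pos hb hz]
    simp [ih, this, add_comm]

theorem isBallotWeight_weight {r : K} (hr₀ : 0 ≤ r) (hr₁ : r ≤ 1) :
    IsBallotWeight (weight r) (2 / (1 + r)) where
  map_zero := by simp [weight]
  nonneg := weight_nonneg hr₀ hr₁
  antitoneOn := (weight_antitoneOn hr₀ hr₁).mono Set.Icc_subset_Ici_self
  mul_neg_le_one ht := weight_mul_weight_neg_le_one hr₀ hr₁ (by rw [abs_of_nonneg ht.1]; exact ht.2)
  neg_le ht := (le_div_iff₀' (by linarith)).2 <|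
    one_add_mul_weight_neg_le_two hr₁ ht.1 ht.2

theorem prod_map_weight_div_le_one {r a : K} (hr₀ : 0 ≤ r) (hr₁ : r ≤ 1) (ha : 0 < a) {A : List K}
    (hA : A.Pairwise fun y z ↦ |y| ≤ |z|) (hAa : ∀ z ∈ A, |z| ≤ a)
    (h_sum : ∀ s, s <:+ A → 0 ≤ signSum s) : (A.map fun z ↦ weight r (z / a)).prod ≤ 1 := by
  have h := (isBallotWeight_weight hr₀ hr₁).prod_le_pow (l := (A.map (· / a)).reverse) (d := 0)
    ?_ ?_ ?_
  · simpa [List.prod_reverse, Function.comp_def] using h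
  · rw [List.pairwise_reverse, List.pairwise_map]
    refine hA.imp fun hyz ↦ ?_
    simp only [abs_div]
    gcongr
  · simpa [abs_div, abs_of_pos ha, div_le_one ha] using hAa
  · intro p hp
    rw [← List.reverse_reverse p, List.reverse_prefix] at hp
    obtain ⟨s, hs, hps⟩ := List.suffix_map_iff.1 hp
    rw [← signSum_reverse, hps, signSum_map_div_of_pos ha]
    simpa using h_sum s hs

theorem one_add_mul_prod_map_weight_div_le_two {r b : K} (hr₀ : 0 ≤ r) (hr₁ : r ≤ 1) (hb : b < 0)
    {B : List K} (hB : B.Pairwise fun y z ↦ |y| ≤ |z|) (hbB : ∀ z ∈ B, |b| ≤ |z|)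
    (h_sum : ∀ p, p <+: B → signSum p ≤ 1) :
    (1 + r) * (B.map fun z ↦ weight r (b / z)).prod ≤ 2 := by
  have h_pos (z) (hz : z ∈ B) : 0 < |z| := (abs_pos_of_neg hb).trans_le (hbB z hz)
  have h := (isBallotWeight_weight hr₀ hr₁).prod_le_pow (l := B.map (b / ·)) (d := 1) ?_ ?_ ?_
  · rwa [pow_one, List.map_map, le_div_iff₀' (by linarith)] at h
  · rw [List.pairwise_map]
    refine hB.imp_of_mem fun hy _ hyz ↦ ?_
    simp only [abs_div]
    have := h_pos _ hy
    gcongr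
  · simpa [abs_div] using fun z hz ↦ (div_le_one (h_pos z hz)).2 (hbB z hz)
  · intro p hp
    obtain ⟨q, hq, rfl⟩ := List.prefix_map_iff.1 hp
    rw [signSum_map_div_of_neg hb]
    have := h_sum q hq
    push_cast
    lia

variable {F : Type*} [Field F]

/-- The product of `1 - z i / z j` over all pairs of positions `i < j` in a list `z`. -/
def ratioProd : List F → F
  | [] => 1
  | z :: l => (l.map fun w ↦ 1 - z / w).prod * ratioProd l

theorem ratioProd_append_cons (A : List F) (a : F) (B : List F) :
    ratioProd (A ++ a :: B) =
      ratioProd (A ++ B) * (A.map fun z ↦ 1 - z / a).prod * (B.map fun z ↦ 1 - a / z).prod := by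
  induction A with
  | nil => simp [ratioProd, mul_comm]
  | cons z A ih =>
    simp only [List.cons_append, ratioProd, ih, List.map_append, List.map_cons, List.prod_append,
      List.prod_cons]
    ring

theorem ratioProd_append_cons_cons (A : List F) {a b : F} (ha : a ≠ 0) (hb : b ≠ 0) (B : List F) :
    ratioProd (A ++ a :: b :: B) =
      (1 + -a / b) * (B.map fun z ↦ weight (-a / b) (b / z)).prod *
        (ratioProd (A ++ B) * (A.map fun z ↦ weight (-a / b) (z / a)).prod) := by
  have h_before (z : F) : weight (-a / b) (z / a) = (1 - z / a) * (1 - z / b) := by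
    rw [weight]; field_simp; ring
  have h_after (z : F) : weight (-a / b) (b / z) = (1 - a / z) * (1 - b / z) := by
    rw [weight, mul_comm, div_mul_div_cancel₀ hb]; ring
  simp only [ratioProd_append_cons, h_before, h_after, List.prod_map_mul, List.map_cons,
    List.prod_cons]
  ring

theorem ratioProd_map_neg (l : List F) : ratioProd (l.map (-·)) = ratioProd l := by
  induction l with
  | nil => rfl
  | cons z l ih => simp [ratioProd, ih, Function.comp_def]

theorem ratioProd_map_range (z : ℕ → F) (n : ℕ) :
    ratioProd ((List.range n).map z) = ∏ j ∈ range n, ∏ i ∈ range j, (1 - z i / z j) := by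
  induction n with
  | zero => rfl
  | succ n ih =>
    rw [List.range_succ, List.map_append, List.map_singleton, ratioProd_append_cons,
      List.append_nil, ih, List.map_map, prod_range_succ, List.map_nil, List.prod_nil, mul_one]
    rfl

theorem ratioProd_nonneg {l : List K} (hl : l.Pairwise fun y z ↦ |y| ≤ |z|) : 0 ≤ ratioProd l := by
  induction l with
  | nil => exact zero_le_one
  | cons z l ih =>
    obtain ⟨hz, hl⟩ := List.pairwise_cons.1 hl
    refine mul_nonneg (List.prod_nonneg (List.forall_mem_map.2 fun w hw ↦ ?_)) (ih hl)
    have : |z / w| ≤ 1 := by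
      rw [abs_div]
      exact div_le_one_of_le₀ (hz w hw) (abs_nonneg w)
    linarith [le_of_abs_le this]

theorem ratioProd_concat_le {A : List K} {a : K} (ha : 0 < a)
    (h_abs : (A ++ [a]).Pairwise fun y z ↦ |y| ≤ |z|) (hA : ∀ s, s <:+ A → 0 ≤ signSum s) :
    ratioProd (A ++ [a]) ≤ ratioProd A := by
  obtain ⟨hA_abs, -, hAa⟩ := List.pairwise_append.1 h_abs
  have h_left := prod_map_weight_div_le_one le_rfl zero_le_one ha hA_abs
    (by simpa [abs_of_pos ha] using hAa) hA
  simp only [weight, zero_mul, add_zero, mul_one] at h_left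
  rw [ratioProd_append_cons]
  simpa using mul_le_of_le_one_right (ratioProd_nonneg hA_abs) h_left

theorem ratioProd_append_cons_cons_le {A B : List K} {a b : K} (ha : 0 < a) (hb : b < 0)
    (h_abs : (A ++ a :: b :: B).Pairwise fun y z ↦ |y| ≤ |z|)
    (hA : ∀ s, s <:+ A → 0 ≤ signSum s) (hB : ∀ p, p <+: B → signSum p ≤ 1) :
    ratioProd (A ++ a :: b :: B) ≤ 2 * ratioProd (A ++ B) := by
  have hAB : 0 ≤ ratioProd (A ++ B) := ratioProd_nonneg (h_abs.sublist (by simp))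
  obtain ⟨hA_abs, habB, hAab⟩ := List.pairwise_append.1 h_abs
  simp only [List.pairwise_cons, List.forall_mem_cons] at habB hAab
  obtain ⟨⟨hab, -⟩, hbB, hB_abs⟩ := habB
  rw [abs_of_pos ha, abs_of_neg hb] at hab
  have hAa (z) (hz : z ∈ A) : |z| ≤ a := abs_of_pos ha ▸ (hAab z hz).1
  have hr₀ : 0 ≤ -a / b := (div_pos_of_neg_of_neg (neg_neg_of_pos ha) hb).le
  have hr₁ : -a / b ≤ 1 := (div_le_one_of_neg hb).2 (by linarith)
  have h_before_nonneg : 0 ≤ (A.map fun z ↦ weight (-a / b) (z / a)).prod := by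
    refine List.prod_nonneg (List.forall_mem_map.2 fun z hz ↦ weight_nonneg hr₀ hr₁ ?_)
    rw [abs_div, abs_of_pos ha]
    exact (div_le_one ha).2 (hAa z hz)
  rw [ratioProd_append_cons_cons A ha.ne' hb.ne B]
  exact mul_le_mul (one_add_mul_prod_map_weight_div_le_two hr₀ hr₁ hb hB_abs hbB hB)
    (mul_le_of_le_one_right hAB (prod_map_weight_div_le_one hr₀ hr₁ ha hA_abs hAa hA))
    (mul_nonneg hAB h_before_nonneg) zero_le_two

theorem exists_sublist_of_head_pos {z : K} (hz : 0 < z) {l : List K}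
    (h_abs : (z :: l).Pairwise fun y z ↦ |y| ≤ |z|) :
    ∃ m, m.Sublist (z :: l) ∧ (m.length + 1 = (z :: l).length ∧ ratioProd (z :: l) ≤ ratioProd m ∨
      m.length + 2 = (z :: l).length ∧ ratioProd (z :: l) ≤ 2 * ratioProd m) := by
  obtain ⟨A, a, B, h_eq, ha, hA, hB⟩ := exists_append_cons_of_head_pos hz l
  rw [h_eq] at h_abs ⊢
  rcases B with _ | ⟨b, B⟩
  · exact ⟨A, by simp, .inl ⟨by simp, ratioProd_concat_le ha h_abs hA⟩⟩
  · have h_sum (p) (hp : p <+: B) : SignType.sign b + signSum p ≤ 0 := by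
      simpa using hB (b :: p) (by simpa using hp)
    have hb : b < 0 := by
      have hab : |a| ≤ |b| := by simp_all [List.pairwise_append]
      have hb₀ : b ≠ 0 := abs_pos.1 ((abs_pos_of_pos ha).trans_le hab)
      by_contra hb
      have := h_sum [] List.nil_prefix
      simp [hb₀.lt_of_le' (not_lt.1 hb)] at this
    refine ⟨A ++ B, by simp, .inr ⟨by simp only [List.length_append, List.length_cons]; lia, ?_⟩⟩
    refine ratioProd_append_cons_cons_le ha hb h_abs hA fun p hp ↦ ?_
    have := h_sum p hp
    simp only [sign_neg hb, SignType.coe_neg_one] at this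
    lia

theorem exists_shorter_ratioProd_le {l : List K} (hl : l ≠ [])
    (h_abs : l.Pairwise fun y z ↦ |y| ≤ |z|) (h₀ : 0 ∉ l) :
    ∃ m : List K, (m.Pairwise fun y z ↦ |y| ≤ |z|) ∧ 0 ∉ m ∧
      (m.length + 1 = l.length ∧ ratioProd l ≤ ratioProd m ∨
        m.length + 2 = l.length ∧ ratioProd l ≤ 2 * ratioProd m) := by
  obtain ⟨z, l, rfl⟩ := List.exists_cons_of_ne_nil hl
  rcases lt_or_gt_of_ne (List.ne_of_not_mem_cons h₀) with hz | hz
  · obtain ⟨m, hm, h⟩ := exists_sublist_of_head_pos hz h_abs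
    exact ⟨m, h_abs.sublist hm, fun h ↦ h₀ (hm.subset h), h⟩
  · have h_neg : ((z :: l).map (-·)).Pairwise fun y z ↦ |y| ≤ |z| := by
      simpa only [List.pairwise_map, abs_neg] using h_abs
    obtain ⟨m, hm, h⟩ := exists_sublist_of_head_pos (neg_pos.2 hz) h_neg
    rw [← List.map_cons (f := (-·)), ratioProd_map_neg, List.length_map] at h
    exact ⟨m, h_neg.sublist hm, fun h ↦ h₀ (by simpa [eq_comm] using hm.subset h), h⟩

theorem ratioProd_le_two_pow {l : List K} (h_abs : l.Pairwise fun y z ↦ |y| ≤ |z|)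
    (h₀ : 0 ∉ l) : ratioProd l ≤ 2 ^ (l.length / 2) := by
  induction hn : l.length using Nat.strong_induction_on generalizing l with
  | _ n ih =>
    rcases eq_or_ne l [] with rfl | hl
    · simp [ratioProd, ← hn]
    obtain ⟨m, hm_abs, hm₀, ⟨h_len, hle⟩ | ⟨h_len, hle⟩⟩ := exists_shorter_ratioProd_le hl h_abs h₀
    · calc ratioProd l ≤ ratioProd m := hle
        _ ≤ 2 ^ (m.length / 2) := ih _ (by lia) hm_abs hm₀ rfl
        _ ≤ 2 ^ (n / 2) := pow_le_pow_right₀ one_le_two (by lia)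
    · calc ratioProd l ≤ 2 * ratioProd m := hle
        _ ≤ 2 * 2 ^ (m.length / 2) := by grw [ih _ (by lia) hm_abs hm₀ rfl]
        _ = 2 ^ (n / 2) := by rw [← pow_succ']; congr 1; lia

theorem prod_one_sub_div_le_two_pow {z : ℕ → K} {N : ℕ}
    (h_abs : ∀ i j, i < j → j < N → |z i| ≤ |z j|) (h₀ : ∀ i < N, z i ≠ 0) :
    ∏ j ∈ range N, ∏ i ∈ range j, (1 - z i / z j) ≤ 2 ^ (N / 2) := by
  have h := ratioProd_le_two_pow (l := (List.range N).map z) ?_ (by simpa using h₀)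
  · simpa [ratioProd_map_range] using h
  · exact List.pairwise_map.2 <| List.pairwise_lt_range.imp_of_mem fun _ hj hij ↦
      h_abs _ _ hij (List.mem_range.1 hj)

theorem prod_filter_le_Icc_eq_prod_range {M : Type*} [CommMonoid M] (f : ℕ → ℕ → M) (n : ℕ) :
    ∏ q ∈ (Icc 1 n ×ˢ Icc 1 n).filter (fun q ↦ q.1 ≤ q.2), f q.1 q.2 =
      ∏ j ∈ range (n + 1), ∏ i ∈ range j, f (i + 1) j := by
  rw [prod_sigma']
  refine prod_nbij' (fun q ↦ ⟨q.2, q.1 - 1⟩) (fun q ↦ (q.2 + 1, q.1)) ?_ ?_ ?_ ?_ ?_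
  all_goals grind

end Pohst

theorem pohst_inequality_general {K : Type*} [Field K] [LinearOrder K] [IsStrictOrderedRing K]
    {n : ℕ} {x : ℕ → K} (hx : ∀ i ∈ Icc 1 n, |x i| ≤ 1) (hx₀ : ∀ i ∈ Icc 1 n, x i ≠ 0) :
    ∏ q ∈ (Icc 1 n ×ˢ Icc 1 n).filter (fun q ↦ q.1 ≤ q.2), (1 - ∏ k ∈ Icc q.1 q.2, x k) ≤
      2 ^ ((n + 1) / 2) := by
  have h_mul {i j : ℕ} (hij : i < j) :
      (∏ k ∈ Ioc 0 i, x k) * ∏ k ∈ Icc (i + 1) j, x k = ∏ k ∈ Ioc 0 j, x k := by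
    rw [Icc_add_one_left_eq_Ioc]
    exact prod_Ioc_consecutive x (Nat.zero_le i) hij.le
  have h_ne (j : ℕ) (hj : j < n + 1) : ∏ k ∈ Ioc 0 j, x k ≠ 0 :=
    prod_ne_zero_iff.2 fun k hk ↦ hx₀ k (by grind)
  have h_anti (i j : ℕ) (hij : i < j) (hj : j < n + 1) :
      |∏ k ∈ Ioc 0 j, x k| ≤ |∏ k ∈ Ioc 0 i, x k| := by
    rw [← h_mul hij, abs_mul, abs_prod (Icc (i + 1) j)]
    exact mul_le_of_le_one_right (abs_nonneg _)
      (prod_le_one (fun _ _ ↦ abs_nonneg _) fun k hk ↦ hx k (by grind))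
  calc ∏ q ∈ (Icc 1 n ×ˢ Icc 1 n).filter (fun q ↦ q.1 ≤ q.2), (1 - ∏ k ∈ Icc q.1 q.2, x k)
      = ∏ j ∈ range (n + 1), ∏ i ∈ range j, (1 - ∏ k ∈ Icc (i + 1) j, x k) :=
        Pohst.prod_filter_le_Icc_eq_prod_range (fun i j ↦ 1 - ∏ k ∈ Icc i j, x k) n
    _ = ∏ j ∈ range (n + 1), ∏ i ∈ range j,
          (1 - (∏ k ∈ Ioc 0 i, x k)⁻¹ / (∏ k ∈ Ioc 0 j, x k)⁻¹) := by
        refine prod_congr rfl fun j hj ↦ prod_congr rfl fun i hi ↦ ?_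
        rw [mem_range] at hi hj
        rw [inv_div_inv, ← h_mul hi, mul_div_cancel_left₀ _ (h_ne i (hi.trans hj))]
    _ ≤ 2 ^ ((n + 1) / 2) := by
        refine Pohst.prod_one_sub_div_le_two_pow (fun i j hij hj ↦ ?_)
          fun j hj ↦ inv_ne_zero (h_ne j hj)
        rw [abs_inv, abs_inv]
        exact inv_anti₀ (abs_pos.2 (h_ne j hj)) (h_anti i j hij hj)

theorem pohst_inequality (n : ℕ) (hn : 1 ≤ n) (x : ℕ → ℝ)
    (hx : ∀ i ∈ Finset.Icc 1 n, x i ∈ Set.Icc (-1 : ℝ) 1 ∧ x i ≠ 0) :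
    ∏ q ∈ (Finset.Icc 1 n ×ˢ Finset.Icc 1 n).filter (fun q => q.1 ≤ q.2),
        (1 - ∏ k ∈ Finset.Icc q.1 q.2, x k) ≤ 2 ^ ((n + 1) / 2) :=
  pohst_inequality_general (fun i hi ↦ abs_le.2 (hx i hi).1) fun i hi ↦ (hx i hi).2
end

section
/- For every v = (x_1, …, x_n) ∈ ([−1,1]∖{0})^n, the set J_v of non-canonical index pairs admits a good partition: there is a partition π_v of J_v such that every block p ∈ π_v is of one of the following three types. (1) p = {(i,j)} is a singleton with s(i,j) = +1. (2) p = {(i,j), (i',j')} with s(i,j) = +1, s(i',j') = −1, and either (i' ≤ i and j = j') or (i' = i and j ≤ j'). (3) p = {(i,j), (i−l,j), (i,j+l'), (i−l,j+l')} with l, l' ≥ 1, s(i,j) = s(i−l,j+l') = +1 and s(i−l,j) = s(i,j+l') = −1. -/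
open Finset

/-- The product sign `s(i,j) = ∏_{k=i}^{j} sign(x_k)`. -/
noncomputable def psign (x : ℕ → ℝ) (i j : ℕ) : ℝ :=
  ∏ k ∈ Finset.Icc i j, Real.sign (x k)

open Classical in
/-- The set `J_v` of non-canonical index pairs: `s(i,j) = (-1)^(i+j)`. -/
noncomputable def Jv (n : ℕ) (x : ℕ → ℝ) : Finset (ℕ × ℕ) :=
  (Finset.Icc 1 n ×ˢ Finset.Icc 1 n).filter
    (fun q => q.1 ≤ q.2 ∧ psign x q.1 q.2 = (-1 : ℝ) ^ (q.1 + q.2))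

/-- Type (1): a singleton `{(i,j)}` with `s(i,j) = +1`. -/
def IsType1 (x : ℕ → ℝ) (p : Finset (ℕ × ℕ)) : Prop :=
  ∃ i j : ℕ, p = {(i, j)} ∧ psign x i j = 1

/-- Type (2): `{(i,j), (i',j')}` with `s(i,j) = +1`, `s(i',j') = -1`, and
`(i' ≤ i ∧ j = j')` or `(i' = i ∧ j ≤ j')`. -/
def IsType2 (x : ℕ → ℝ) (p : Finset (ℕ × ℕ)) : Prop :=
  ∃ i j i' j' : ℕ, p = {(i, j), (i', j')} ∧
    psign x i j = 1 ∧ psign x i' j' = -1 ∧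
    ((i' ≤ i ∧ j = j') ∨ (i' = i ∧ j ≤ j'))

/-- Type (3): `{(i,j), (i-l,j), (i,j+l'), (i-l,j+l')}` with `l, l' ≥ 1`,
`s(i,j) = s(i-l,j+l') = +1` and `s(i-l,j) = s(i,j+l') = -1`. -/
def IsType3 (x : ℕ → ℝ) (p : Finset (ℕ × ℕ)) : Prop :=
  ∃ i j l l' : ℕ, 1 ≤ l ∧ 1 ≤ l' ∧
    p = {(i, j), (i - l, j), (i, j + l'), (i - l, j + l')} ∧
    psign x i j = 1 ∧ psign x (i - l) (j + l') = 1 ∧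
    psign x (i - l) j = -1 ∧ psign x i (j + l') = -1

/-!
Let `s(1,t)` be the prefix signs and colour `t ∈ {0, …, n}` by `c t = (-1)^t s(1,t)`. Since
`s(i,j) = s(1,i-1) s(1,j)`, the pair `(i,j)` is non-canonical iff `i - 1` and `j` have different
colours, so `J_v` becomes the set of bichromatic pairs `a < b`. The signs `c t * s(1,t)` alternate.

Read the prefix signs as steps of a walk and cut the walk at its maximum. The last step before the
cut is `+1`, the first one after it is `-1`, and the two have the same colour `κ`. Let `V` consist
of these two points, or of the one that exists. Every bichromatic pair that meets `V` joins it to a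
point of the other colour, which lies either to the left or to the right. After the cut the partial
sums of the walk are nonpositive, and alternation passes this on to the steps of colour `≠ κ`; so
these satisfy a ballot condition and can be matched into pairs `-1, +1` in this order, leaving only
`-1`s. Each matched pair or lone point times `V` is a good block, and the left side is symmetric.
After the removal of `V` the signs `c t * s(1,t)` still alternate, so induction finishes the proof.
-/

section Tiling

variable {ι κ : Type*} [DecidableEq ι] [DecidableEq κ] {B : Finset ι → Prop} {s t : Finset ι}

/-- `s` can be partitioned into nonempty finite sets that all satisfy `B`. -/
def TiledBy (B : Finset ι → Prop) (s : Finset ι) : Prop :=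
  ∃ P : Finpartition s, ∀ p ∈ P.parts, B p

lemma TiledBy.empty : TiledBy B ∅ :=
  ⟨Finpartition.empty _, by simp⟩

lemma TiledBy.of_forall_singleton (h : ∀ i ∈ s, B {i}) : TiledBy B s := by
  refine ⟨⊥, fun p hp => ?_⟩
  obtain ⟨i, hi, rfl⟩ := Finpartition.mem_bot_iff.1 hp
  exact h i hi

lemma TiledBy.self (hs : s.Nonempty) (h : B s) : TiledBy B s :=
  ⟨Finpartition.indiscrete hs.ne_empty, by simpa using h⟩

lemma TiledBy.union (hs : TiledBy B s) (ht : TiledBy B t) (hst : Disjoint s t) :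
    TiledBy B (s ∪ t) := by
  obtain ⟨P, hP⟩ := hs
  obtain ⟨Q, hQ⟩ := ht
  refine ⟨⟨P.parts ∪ Q.parts, ?_, ?_, ?_⟩, ?_⟩
  · rw [supIndep_iff_pairwiseDisjoint, coe_union, Set.pairwiseDisjoint_union]
    exact ⟨P.disjoint, Q.disjoint, fun p hp q hq _ => hst.mono (P.le hp) (Q.le hq)⟩
  · rw [sup_union, P.sup_parts, Q.sup_parts, sup_eq_union]
  · simp
  · simpa only [mem_union, or_imp, forall_and] using ⟨hP, hQ⟩

lemma TiledBy.map {C : Finset κ → Prop} {Φ : Finset ι → Finset κ} (h : TiledBy B s)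
    (hunion : ∀ p q, Φ (p ∪ q) = Φ p ∪ Φ q) (hdisj : ∀ p q, Disjoint p q → Disjoint (Φ p) (Φ q))
    (hBC : ∀ p ⊆ s, B p → C (Φ p)) : TiledBy C (Φ s) := by
  obtain ⟨P, hP⟩ := h
  have hempty : Φ ∅ = ∅ := disjoint_self_iff_empty _ |>.1 (hdisj ∅ ∅ (disjoint_empty_left ∅))
  have hindep : (P.parts.image Φ).SupIndep id := by
    rw [supIndep_iff_pairwiseDisjoint]
    intro p' hp' q' hq' hne
    obtain ⟨p, hp, rfl⟩ := mem_image.1 hp'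
    obtain ⟨q, hq, rfl⟩ := mem_image.1 hq'
    exact hdisj p q (P.disjoint hp hq fun hpq => hne (congrArg Φ hpq))
  have hsup : (P.parts.image Φ).sup id = Φ s := by
    rw [sup_image]
    exact P.sup_parts_apply hunion hempty
  refine ⟨.ofErase _ hindep hsup, fun p' hp' => ?_⟩
  obtain ⟨p, hp, rfl⟩ := mem_image.1 (mem_of_mem_erase hp')
  exact hBC p (P.le hp) (hP p hp)

end Tiling

section Ballot

variable {α β : Type*} [LinearOrder β] [DecidableEq α]

/-- A cell: a point `a` of sign `e`, alone or together with a point `b` of the other sign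
that the rank function `f` does not place before `a`. The case `b = a` encodes the lone point. -/
def IsCell (f : α → β) (w : α → ℤˣ) (e : ℤˣ) (p : Finset α) : Prop :=
  ∃ a b, w a = e ∧ f a ≤ f b ∧ (b = a ∨ w b ≠ e) ∧ p = {a, b}

lemma isCell_singleton {f : α → β} {w : α → ℤˣ} {e : ℤˣ} {a : α} (ha : w a = e) :
    IsCell f w e {a} :=
  ⟨a, a, ha, le_rfl, .inl rfl, by simp⟩

lemma isCell_pair {f : α → β} {w : α → ℤˣ} {e : ℤˣ} {a b : α} (ha : w a = e) (hb : w b ≠ e)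
    (hab : f a ≤ f b) : IsCell f w e {a, b} :=
  ⟨a, b, ha, hab, .inr hb, rfl⟩

lemma intUnits_mul_eq_neg_one_iff {u v : ℤˣ} : u * v = -1 ↔ u ≠ v := by
  revert u v
  decide

/-- In a ballot sequence, the first point of the wrong sign is preceded by one of sign `e`;
these two points form a cell, and removing them leaves a ballot sequence. -/
theorem tiledBy_isCell_of_ballot (f : α → β) (w : α → ℤˣ) (e : ℤˣ) (S : Finset α)
    (h : ∀ t, 0 ≤ (e : ℤ) * ∑ i ∈ S with f i ≤ t, (w i : ℤ)) : TiledBy (IsCell f w e) S := by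
  have hmul : ∀ F : Finset α, (e : ℤ) * ∑ i ∈ F, (w i : ℤ) = ∑ i ∈ F, ((e * w i : ℤˣ) : ℤ) :=
    fun F => by simp only [mul_sum, Units.val_mul]
  simp only [hmul] at h
  induction S using Finset.strongInduction with
  | H S ih =>
    by_cases hS : ∀ i ∈ S, w i = e
    · exact .of_forall_singleton fun i hi => isCell_singleton (hS i hi)
    obtain ⟨b, hb, hmin⟩ :=
      exists_min_image {i ∈ S | w i ≠ e} f (by simpa [Finset.Nonempty] using hS)
    simp only [mem_filter] at hb hmin
    obtain ⟨a, haS, hab, ha⟩ : ∃ a ∈ S, f a ≤ f b ∧ w a = e := by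
      by_contra! hnone
      refine (h (f b)).not_gt (sum_neg (fun i hi => ?_) ⟨b, by simp [hb.1]⟩)
      obtain ⟨hiS, hib⟩ := mem_filter.1 hi
      simp [intUnits_mul_eq_neg_one_iff.2 (hnone i hiS hib).symm]
    have hne : a ≠ b := by rintro rfl; exact hb.2 ha
    have hsub : {a, b} ⊆ S := by simp [insert_subset_iff, haS, hb.1]
    have hrest : TiledBy (IsCell f w e) (S \ {a, b}) := by
      refine ih _ (sdiff_ssubset hsub (insert_nonempty a {b})) fun t => ?_
      by_cases hbt : f b ≤ t
      · have hpair := sum_sdiff (f := fun i => if f i ≤ t then ((e * w i : ℤˣ) : ℤ) else 0) hsub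
        rw [sum_pair hne, if_pos (hab.trans hbt), if_pos hbt, ha, Int.units_mul_self,
          intUnits_mul_eq_neg_one_iff.2 hb.2.symm] at hpair
        have := h t
        simp only [sum_filter, Units.val_one, Units.val_neg] at this hpair ⊢
        linarith
      · refine sum_nonneg fun i hi => ?_
        obtain ⟨hiS, hit⟩ := mem_filter.1 hi
        have hwi : w i = e := by
          by_contra hwi
          exact hbt ((hmin i ⟨(mem_sdiff.1 hiS).1, hwi⟩).trans hit)
        simp [hwi, Int.units_mul_self]
    rw [← sdiff_union_of_subset hsub]
    exact hrest.union (.self (insert_nonempty a {b}) (isCell_pair ha hb.2 hab)) sdiff_disjoint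

end Ballot

section Peak

variable {α M : Type*} [LinearOrder α] [AddCommGroup M] [LinearOrder M] [IsOrderedAddMonoid M]

/-- The walk with steps `w` along `L ∪ R` is highest after `L` and before `R`, expressed by the
partial sums to both sides of that moment. -/
structure IsPeak (w : α → M) (L R : Finset α) : Prop where
  lt : ∀ l ∈ L, ∀ r ∈ R, l < r
  left : ∀ t, 0 ≤ ∑ i ∈ L with t ≤ i, w i
  right : ∀ t, ∑ i ∈ R with i ≤ t, w i ≤ 0

/-- Take for `L` an initial segment of `A` whose sum is maximal. -/
lemma exists_isPeak (w : α → M) (A : Finset α) : ∃ L R, L ∪ R = A ∧ IsPeak w L R := by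
  obtain ⟨L, hL, hmax⟩ := exists_max_image
    {L ∈ A.powerset | ∀ l ∈ L, ∀ a ∈ A, a ≤ l → a ∈ L} (fun L => ∑ i ∈ L, w i)
    ⟨∅, by simp⟩
  simp only [mem_filter, mem_powerset, and_imp] at hL hmax
  obtain ⟨hLA, hL⟩ := hL
  have hlt : ∀ l ∈ L, ∀ r ∈ A \ L, l < r := fun l hl r hr =>
    not_le.1 fun hrl => (mem_sdiff.1 hr).2 (hL l hl r (mem_sdiff.1 hr).1 hrl)
  refine ⟨L, A \ L, union_sdiff_of_subset hLA, hlt, fun t => ?_, fun t => ?_⟩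
  · have := hmax {i ∈ L | ¬ t ≤ i} ((filter_subset _ _).trans hLA) fun l hl a ha hal =>
      mem_filter.2 ⟨hL l (mem_filter.1 hl).1 a ha hal,
        fun hta => (mem_filter.1 hl).2 (hta.trans hal)⟩
    rwa [← sum_filter_add_sum_filter_not L (t ≤ ·), le_add_iff_nonneg_left] at this
  · have hdisj : Disjoint L {i ∈ A \ L | i ≤ t} := disjoint_sdiff.mono_right (filter_subset _ _)
    have := hmax (L ∪ {i ∈ A \ L | i ≤ t})
      (union_subset hLA ((filter_subset _ _).trans sdiff_subset)) (by
        intro l hl a ha hal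
        by_cases haL : a ∈ L
        · exact mem_union_left _ haL
        have hlL : l ∉ L := fun hlL => haL (hL l hlL a ha hal)
        have hlt : l ≤ t := (mem_filter.1 ((mem_union.1 hl).resolve_left hlL)).2
        exact mem_union_right _ (mem_filter.2 ⟨mem_sdiff.2 ⟨ha, haL⟩, hal.trans hlt⟩))
    rwa [sum_union hdisj, add_le_iff_nonpos_right] at this

end Peak

section Alternating

variable {α : Type*} [LinearOrder α] {A F : Finset α}

/-- `F` consists of consecutive elements of `A`. -/
def IsSegment (F A : Finset α) : Prop :=
  F ⊆ A ∧ ∀ a ∈ F, ∀ b ∈ F, ∀ i ∈ A, a ≤ i → i ≤ b → i ∈ F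

/-- The signs `ε` alternate along `A`, expressed by the sums over segments. -/
def IsAlternating (ε : α → ℤˣ) (A : Finset α) : Prop :=
  ∀ F, IsSegment F A → |∑ i ∈ F, (ε i : ℤ)| ≤ 1

lemma isAlternating_neg_one_pow (n : ℕ) : IsAlternating (fun i => (-1) ^ i) (range n) := by
  rintro F ⟨hFn, hF⟩
  obtain rfl | hne := F.eq_empty_or_nonempty
  · simp
  have hmem : F = Ico (F.min' hne) (F.max' hne + 1) := by
    ext i
    rw [mem_Ico, Nat.lt_succ_iff]
    refine ⟨fun hi => ⟨min'_le F i hi, le_max' F i hi⟩, fun ⟨hmin, hmax⟩ => ?_⟩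
    have hmaxn := mem_range.1 (hFn (max'_mem F hne))
    exact hF _ (min'_mem F hne) _ (max'_mem F hne) i (mem_range.2 (hmax.trans_lt hmaxn)) hmin hmax
  rw [hmem]
  simp only [Units.val_pow_eq_pow_val, Units.val_neg, Units.val_one]
  rw [sum_Ico_eq_sub _ ((min'_le_max' F hne).trans (Nat.le_succ _)), neg_one_geom_sum,
    neg_one_geom_sum]
  split_ifs <;> simp

/-- The key identity: on points coloured `κ` the terms `w i` and `κ * (c i * w i)` cancel,
on the others they agree. -/
lemma two_mul_sum_filter_color_ne {ι : Type*} (F : Finset ι) (c w : ι → ℤˣ) (κ : ℤˣ) :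
    2 * ∑ i ∈ F with c i ≠ κ, (w i : ℤ) =
      ∑ i ∈ F, (w i : ℤ) - κ * ∑ i ∈ F, ((c * w) i : ℤ) := by
  rw [sum_filter, mul_sum, mul_sum, ← sum_sub_distrib]
  refine sum_congr rfl fun i _ => ?_
  rcases Int.units_eq_one_or κ with hκ | hκ <;> rcases Int.units_eq_one_or (c i) with hc | hc <;>
    simp [hκ, hc, two_mul]

lemma sum_filter_color_ne_nonneg {ι : Type*} {F : Finset ι} {c w : ι → ℤˣ} {e : ℤˣ} (κ : ℤˣ)
    (hcw : |∑ i ∈ F, ((c * w) i : ℤ)| ≤ 1) (hw : 0 ≤ (e : ℤ) * ∑ i ∈ F, (w i : ℤ)) :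
    0 ≤ (e : ℤ) * ∑ i ∈ F with c i ≠ κ, (w i : ℤ) := by
  have hsum := two_mul_sum_filter_color_ne F c w κ
  rw [abs_le] at hcw
  rcases Int.units_eq_one_or κ with rfl | rfl <;> rcases Int.units_eq_one_or e with rfl | rfl <;>
    simp only [Units.val_one, Units.val_neg] at hsum hw ⊢ <;> omega

lemma IsPeak.tiledBy_right {c w : α → ℤˣ} {L R : Finset α}
    (h : IsPeak (fun i => (w i : ℤ)) L R) (hcw : IsAlternating (c * w) (L ∪ R)) (κ : ℤˣ) :
    TiledBy (IsCell id w (-1)) {b ∈ R | c b ≠ κ} := by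
  refine tiledBy_isCell_of_ballot _ _ _ _ fun t => ?_
  rw [filter_comm]
  refine sum_filter_color_ne_nonneg κ (hcw _ ⟨?_, fun a ha b hb i hi hai hib => ?_⟩) ?_
  · exact (filter_subset _ _).trans subset_union_right
  · simp only [mem_filter, mem_union] at ha hb hi ⊢
    exact ⟨hi.resolve_left fun hiL => (h.lt i hiL a ha.1).not_ge hai, hib.trans hb.2⟩
  · simpa using h.right t

lemma IsPeak.tiledBy_left {c w : α → ℤˣ} {L R : Finset α}
    (h : IsPeak (fun i => (w i : ℤ)) L R) (hcw : IsAlternating (c * w) (L ∪ R)) (κ : ℤˣ) :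
    TiledBy (IsCell OrderDual.toDual w 1) {a ∈ L | c a ≠ κ} := by
  refine tiledBy_isCell_of_ballot _ _ _ _ fun t => ?_
  rw [filter_comm]
  refine sum_filter_color_ne_nonneg κ (hcw _ ⟨?_, fun a ha b hb i hi hai hib => ?_⟩) ?_
  · exact (filter_subset _ _).trans subset_union_left
  · simp only [mem_filter, mem_union] at ha hb hi ⊢
    exact ⟨hi.resolve_right fun hiR => (h.lt b hb.1 i hiR).not_ge hib,
      (OrderDual.toDual_le_toDual.2 hai).trans ha.2⟩
  · rw [Units.val_one, one_mul]
    exact h.left (OrderDual.ofDual t)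

end Alternating

section Summit

variable {α : Type*} [LinearOrder α] {c w : α → ℤˣ} {κ : ℤˣ} {L R V : Finset α}

/-- `V` consists of the last point of `L` and the first point of `R` (as far as they exist)
for a peak between `L` and `R`; the fields are what the removal of `V` from `L ∪ R` needs. -/
structure IsSummit (c w : α → ℤˣ) (κ : ℤˣ) (L R V : Finset α) : Prop where
  subset : V ⊆ L ∪ R
  nonempty : V.Nonempty
  lt_iff : ∀ v ∈ V, ∀ i ∈ L ∪ R, i ∉ V → (v < i ↔ i ∈ R)
  color : ∀ v ∈ V, c v = κ
  sum_eq_zero : L.Nonempty → R.Nonempty → ∑ v ∈ V, ((c * w) v : ℤ) = 0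
  left_cell : L.Nonempty → IsCell id w 1 V
  right_cell : R.Nonempty → IsCell OrderDual.toDual w (-1) V

lemma IsPeak.eq_one_of_isGreatest (h : IsPeak (fun i => (w i : ℤ)) L R) {l : α}
    (hl : IsGreatest (L : Set α) l) : w l = 1 := by
  have hfilter : {i ∈ L | l ≤ i} = {l} := by
    ext i
    simp only [mem_filter, mem_singleton]
    exact ⟨fun hi => (hl.2 hi.1).antisymm hi.2, by rintro rfl; exact ⟨hl.1, le_rfl⟩⟩
  have hsum := h.left l
  rw [hfilter, sum_singleton] at hsum
  rcases Int.units_eq_one_or (w l) with hw | hw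
  · exact hw
  · simp [hw] at hsum

lemma IsPeak.eq_neg_one_of_isLeast (h : IsPeak (fun i => (w i : ℤ)) L R) {r : α}
    (hr : IsLeast (R : Set α) r) : w r = -1 := by
  have hfilter : {i ∈ R | i ≤ r} = {r} := by
    ext i
    simp only [mem_filter, mem_singleton]
    exact ⟨fun hi => hi.2.antisymm (hr.2 hi.1), by rintro rfl; exact ⟨hr.1, le_rfl⟩⟩
  have hsum := h.right r
  rw [hfilter, sum_singleton] at hsum
  rcases Int.units_eq_one_or (w r) with hw | hw
  · simp [hw] at hsum
  · exact hw

lemma IsPeak.isSummit_pair (h : IsPeak (fun i => (w i : ℤ)) L R)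
    (hcw : IsAlternating (c * w) (L ∪ R)) {l r : α} (hl : IsGreatest (L : Set α) l)
    (hr : IsLeast (R : Set α) r) : IsSummit c w (c r) L R {l, r} := by
  have hwl := h.eq_one_of_isGreatest hl
  have hwr := h.eq_neg_one_of_isLeast hr
  have hlr : l < r := h.lt l hl.1 r hr.1
  have hL : ∀ i ∈ L, i ≤ l := fun i hi => hl.2 hi
  have hR : ∀ i ∈ R, r ≤ i := fun i hi => hr.2 hi
  have hseg : IsSegment {l, r} (L ∪ R) := by
    refine ⟨insert_subset (mem_union_left _ hl.1) (by simpa using .inr hr.1), ?_⟩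
    grind
  have hc : c l = c r := by
    have := hcw _ hseg
    rw [sum_pair hlr.ne] at this
    rcases Int.units_eq_one_or (c l) with hcl | hcl <;>
      rcases Int.units_eq_one_or (c r) with hcr | hcr <;> simp_all
  refine ⟨hseg.1, insert_nonempty _ _, ?_, by simp [hc], fun _ _ => ?_, fun _ => ?_, fun _ => ?_⟩
  · grind
  · simp [sum_pair hlr.ne, hwl, hwr, hc]
  · exact isCell_pair hwl (by simp [hwr]) hlr.le
  · rw [pair_comm]
    exact isCell_pair hwr (by simp [hwl]) (OrderDual.toDual_le_toDual.2 hlr.le)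

lemma IsPeak.isSummit_singleton_right (h : IsPeak (fun i => (w i : ℤ)) ∅ R) {r : α}
    (hr : IsLeast (R : Set α) r) : IsSummit c w (c r) ∅ R {r} := by
  have hwr := h.eq_neg_one_of_isLeast hr
  refine ⟨?_, singleton_nonempty r, ?_, by simp, by simp, by simp, fun _ => isCell_singleton hwr⟩
  · simpa using hr.1
  · simp only [mem_singleton, empty_union]
    rintro _ rfl i hi hir
    exact ⟨fun _ => hi, fun _ => (hr.2 hi).lt_of_ne' hir⟩

lemma IsPeak.isSummit_singleton_left (h : IsPeak (fun i => (w i : ℤ)) L ∅) {l : α}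
    (hl : IsGreatest (L : Set α) l) : IsSummit c w (c l) L ∅ {l} := by
  have hwl := h.eq_one_of_isGreatest hl
  refine ⟨?_, singleton_nonempty l, ?_, by simp, by simp, fun _ => isCell_singleton hwl, by simp⟩
  · simpa using hl.1
  · simp only [mem_singleton, union_empty, notMem_empty, iff_false, not_lt]
    rintro _ rfl i hi -
    exact hl.2 hi

lemma IsPeak.exists_isSummit (h : IsPeak (fun i => (w i : ℤ)) L R)
    (hcw : IsAlternating (c * w) (L ∪ R)) (hne : (L ∪ R).Nonempty) :
    ∃ V κ, IsSummit c w κ L R V := by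
  obtain rfl | hL := L.eq_empty_or_nonempty <;> obtain rfl | hR := R.eq_empty_or_nonempty
  · simp at hne
  · exact ⟨_, _, h.isSummit_singleton_right (isLeast_min' R hR)⟩
  · exact ⟨_, _, h.isSummit_singleton_left (isGreatest_max' L hL)⟩
  · exact ⟨_, _, h.isSummit_pair hcw (isGreatest_max' L hL) (isLeast_min' R hR)⟩

lemma IsSummit.mem_right_of_le (h : IsSummit c w κ L R V) {v i : α} (hv : v ∈ V)
    (hi : i ∈ (L ∪ R) \ V) (hvi : v ≤ i) : i ∈ R := by
  obtain ⟨hiLR, hiV⟩ := mem_sdiff.1 hi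
  exact (h.lt_iff v hv i hiLR hiV).1 (hvi.lt_of_ne (by rintro rfl; exact hiV hv))

lemma IsSummit.mem_left_of_le (h : IsSummit c w κ L R V) {v i : α} (hv : v ∈ V)
    (hi : i ∈ (L ∪ R) \ V) (hiv : i ≤ v) : i ∈ L := by
  obtain ⟨hiLR, hiV⟩ := mem_sdiff.1 hi
  exact (mem_union.1 hiLR).resolve_right fun hiR =>
    hiv.not_gt ((h.lt_iff v hv i hiLR hiV).2 hiR)

lemma IsSummit.isSegment_union (h : IsSummit c w κ L R V) (hp : IsPeak (fun i => (w i : ℤ)) L R)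
    {F : Finset α} (hF : IsSegment F ((L ∪ R) \ V)) {l r : α} (hlF : l ∈ F) (hl : l ∈ L)
    (hrF : r ∈ F) (hr : r ∈ R) : IsSegment (F ∪ V) (L ∪ R) := by
  refine ⟨union_subset (hF.1.trans sdiff_subset) h.subset, fun a ha b hb i hi hai hib => ?_⟩
  by_cases hiV : i ∈ V
  · exact mem_union_right _ hiV
  have hiLR : i ∈ (L ∪ R) \ V := mem_sdiff.2 ⟨hi, hiV⟩
  refine mem_union_left _ ?_
  rcases mem_union.1 ha with haF | haV <;> rcases mem_union.1 hb with hbF | hbV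
  · exact hF.2 a haF b hbF i hiLR hai hib
  · exact hF.2 a haF r hrF i hiLR hai (hp.lt i (h.mem_left_of_le hbV hiLR hib) r hr).le
  · exact hF.2 l hlF b hbF i hiLR (hp.lt l hl i (h.mem_right_of_le haV hiLR hai)).le hib
  · exact absurd (hp.lt i (h.mem_left_of_le hbV hiLR hib) i (h.mem_right_of_le haV hiLR hai))
      (lt_irrefl i)

/-- A segment `F` that meets both sides of the peak becomes a segment with the same sum when `V`
is added; any other segment is already one of `L ∪ R`. -/
lemma IsSummit.isAlternating_sdiff (h : IsSummit c w κ L R V)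
    (hp : IsPeak (fun i => (w i : ℤ)) L R) (hcw : IsAlternating (c * w) (L ∪ R)) :
    IsAlternating (c * w) ((L ∪ R) \ V) := by
  intro F hF
  by_cases hboth : (∃ l ∈ F, l ∈ L) ∧ ∃ r ∈ F, r ∈ R
  · obtain ⟨⟨l, hlF, hl⟩, r, hrF, hr⟩ := hboth
    have hsum := hcw _ (h.isSegment_union hp hF hlF hl hrF hr)
    rwa [sum_union (disjoint_sdiff.symm.mono_left hF.1), h.sum_eq_zero ⟨l, hl⟩ ⟨r, hr⟩,
      add_zero] at hsum
  · refine hcw F ⟨hF.1.trans sdiff_subset, fun a ha b hb i hi hai hib => ?_⟩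
    by_cases hiV : i ∈ V
    · exact absurd ⟨⟨a, ha, h.mem_left_of_le hiV (hF.1 ha) hai⟩,
        b, hb, h.mem_right_of_le hiV (hF.1 hb) hib⟩ hboth
    · exact hF.2 a ha b hb i (mem_sdiff.2 ⟨hi, hiV⟩) hai hib

end Summit

section CrossPairs

variable {α : Type*} [LinearOrder α] {c w : α → ℤˣ} {κ : ℤˣ} {A L R V : Finset α}

/-- The increasing pairs in `A` whose ends have different colours. -/
def crossPairs (c : α → ℤˣ) (A : Finset α) : Finset (α × α) :=
  {q ∈ A ×ˢ A | q.1 < q.2 ∧ c q.1 ≠ c q.2}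

lemma mem_crossPairs {q : α × α} :
    q ∈ crossPairs c A ↔ (q.1 ∈ A ∧ q.2 ∈ A) ∧ q.1 < q.2 ∧ c q.1 ≠ c q.2 := by
  simp only [crossPairs, mem_filter, mem_product]

/-- A product of two cells whose first points have the same sign; the first cell extends downwards
and the second one upwards. These are the good blocks of all three types. -/
def IsBlock (w : α → ℤˣ) (p : Finset (α × α)) : Prop :=
  ∃ e I J, IsCell OrderDual.toDual w e I ∧ IsCell id w e J ∧ p = I ×ˢ J

/-- The points of `V` share their colour, so no pair has both ends in `V`. -/
lemma IsSummit.crossPairs_union (h : IsSummit c w κ L R V) (hp : IsPeak (fun i => (w i : ℤ)) L R) :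
    crossPairs c (L ∪ R) = crossPairs c ((L ∪ R) \ V) ∪
      (V ×ˢ {b ∈ R | c b ≠ κ} ∪ {a ∈ L | c a ≠ κ} ×ˢ V) := by
  have hlt := hp.lt
  have hlt_iff := h.lt_iff
  have hcolor := h.color
  have hsubset := h.subset
  ext ⟨a, b⟩
  simp only [mem_crossPairs, mem_union, mem_sdiff, mem_product, mem_filter]
  grind

lemma IsSummit.tiledBy_right_arm (h : IsSummit c w κ L R V) (hp : IsPeak (fun i => (w i : ℤ)) L R)
    (hcw : IsAlternating (c * w) (L ∪ R)) : TiledBy (IsBlock w) (V ×ˢ {b ∈ R | c b ≠ κ}) := by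
  refine (hp.tiledBy_right hcw κ).map (Φ := (V ×ˢ ·)) (fun _ _ => product_union)
    (fun _ _ hd => disjoint_product.2 (.inr hd)) fun p hpS hcell => ?_
  obtain ⟨i, hi⟩ : p.Nonempty := by
    obtain ⟨a, b, -, -, -, rfl⟩ := hcell
    exact insert_nonempty _ _
  exact ⟨-1, V, p, h.right_cell ⟨i, (mem_filter.1 (hpS hi)).1⟩, hcell, rfl⟩

lemma IsSummit.tiledBy_left_arm (h : IsSummit c w κ L R V) (hp : IsPeak (fun i => (w i : ℤ)) L R)
    (hcw : IsAlternating (c * w) (L ∪ R)) : TiledBy (IsBlock w) ({a ∈ L | c a ≠ κ} ×ˢ V) := by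
  refine (hp.tiledBy_left hcw κ).map (Φ := (· ×ˢ V)) (fun _ _ => union_product)
    (fun _ _ hd => disjoint_product.2 (.inl hd)) fun p hpS hcell => ?_
  obtain ⟨i, hi⟩ : p.Nonempty := by
    obtain ⟨a, b, -, -, -, rfl⟩ := hcell
    exact insert_nonempty _ _
  exact ⟨1, p, V, hcell, h.left_cell ⟨i, (mem_filter.1 (hpS hi)).1⟩, rfl⟩

theorem tiledBy_crossPairs (c w : α → ℤˣ) (A : Finset α) (hcw : IsAlternating (c * w) A) :
    TiledBy (IsBlock w) (crossPairs c A) := by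
  induction A using Finset.strongInduction with
  | H A ih =>
    obtain rfl | hne := A.eq_empty_or_nonempty
    · exact .empty
    obtain ⟨L, R, rfl, hp⟩ := exists_isPeak (fun i => (w i : ℤ)) A
    obtain ⟨V, κ, hV⟩ := hp.exists_isSummit hcw hne
    rw [hV.crossPairs_union hp]
    have hrest := ih _ (sdiff_ssubset hV.subset hV.nonempty) (hV.isAlternating_sdiff hp hcw)
    refine hrest.union ((hV.tiledBy_right_arm hp hcw).union (hV.tiledBy_left_arm hp hcw) ?_) ?_
    · refine disjoint_product.2 (.inl (disjoint_left.2 fun a haV ha => ?_))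
      exact (mem_filter.1 ha).2 (hV.color a haV)
    · simp only [disjoint_left, mem_crossPairs, mem_sdiff, mem_union, mem_product]
      tauto

end CrossPairs

section Signs

variable {n : ℕ} {x : ℕ → ℝ} {c : ℕ → ℤˣ}

/-- The sign of `t` as a unit; the value at `0` is a junk `1`. -/
noncomputable def signUnit (t : ℝ) : ℤˣ :=
  if t < 0 then -1 else 1

lemma coe_signUnit {t : ℝ} (ht : t ≠ 0) : ((signUnit t : ℤ) : ℝ) = Real.sign t := by
  rcases ht.lt_or_gt with ht | ht
  · simp [signUnit, ht, Real.sign_of_neg ht]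
  · simp [signUnit, ht.not_gt, Real.sign_of_pos ht]

/-- The prefix sign `s(1,t)`, with `s(1,0) = 1`. -/
noncomputable def prefixSign (x : ℕ → ℝ) (t : ℕ) : ℤˣ :=
  ∏ k ∈ Ico 1 (t + 1), signUnit (x k)

/-- The colour `(-1)^t s(1,t)` of the index `t`. -/
noncomputable def signColor (x : ℕ → ℝ) (t : ℕ) : ℤˣ :=
  (-1) ^ t * prefixSign x t

lemma isAlternating_signColor_mul_prefixSign (x : ℕ → ℝ) (n : ℕ) :
    IsAlternating (signColor x * prefixSign x) (range n) := by
  have hmul : signColor x * prefixSign x = fun i => (-1) ^ i :=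
    funext fun i => by simp only [Pi.mul_apply, signColor, mul_assoc, Int.units_mul_self, mul_one]
  exact hmul ▸ isAlternating_neg_one_pow n

lemma psign_succ_eq_prefixSign_mul (hx : ∀ i ∈ Finset.Icc 1 n, x i ≠ 0) {a b : ℕ} (hab : a ≤ b)
    (hb : b ≤ n) : psign x (a + 1) b = ((prefixSign x a * prefixSign x b : ℤˣ) : ℤ) := by
  have hprod : ∏ k ∈ Ico (a + 1) (b + 1), signUnit (x k) = prefixSign x a * prefixSign x b := by
    rw [← mul_right_inj (prefixSign x a), ← mul_assoc, Int.units_mul_self, one_mul]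
    exact prod_Ico_consecutive _ (by omega) (by omega)
  rw [← hprod, Units.coe_prod, Int.cast_prod, psign, ← Ico_add_one_right_eq_Icc]
  refine prod_congr rfl fun k hk => (coe_signUnit (hx k ?_)).symm
  rw [mem_Ico] at hk
  rw [Finset.mem_Icc]
  omega

lemma psign_succ_eq_one_iff (hx : ∀ i ∈ Finset.Icc 1 n, x i ≠ 0) {a b : ℕ} (hab : a ≤ b)
    (hb : b ≤ n) : psign x (a + 1) b = 1 ↔ prefixSign x a = prefixSign x b := by
  rw [psign_succ_eq_prefixSign_mul hx hab hb, Int.cast_eq_one, Units.val_eq_one,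
    mul_eq_one_iff_eq_inv, Int.units_inv_eq_self]

lemma psign_succ_eq_neg_one_iff (hx : ∀ i ∈ Finset.Icc 1 n, x i ≠ 0) {a b : ℕ} (hab : a ≤ b)
    (hb : b ≤ n) : psign x (a + 1) b = -1 ↔ prefixSign x a ≠ prefixSign x b := by
  rw [psign_succ_eq_prefixSign_mul hx hab hb]
  rw [← intUnits_mul_eq_neg_one_iff, ← Units.val_inj, ← Int.cast_inj (α := ℝ)]
  simp only [Units.val_neg, Units.val_one, Int.cast_neg, Int.cast_one]

lemma psign_succ_eq_neg_one_pow_iff (hx : ∀ i ∈ Finset.Icc 1 n, x i ≠ 0) {a b : ℕ} (hab : a ≤ b)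
    (hb : b ≤ n) : psign x (a + 1) b = (-1) ^ (a + 1 + b) ↔ signColor x a ≠ signColor x b := by
  have hunits : ∀ p q u v : ℤˣ, p * q = u * -1 * v ↔ u * p ≠ v * q := by decide
  have hpow : (-1 : ℝ) ^ (a + 1 + b) = (((-1) ^ (a + 1 + b) : ℤˣ) : ℤ) := by push_cast; rfl
  rw [psign_succ_eq_prefixSign_mul hx hab hb, hpow, Int.cast_inj, Units.val_inj, pow_add, pow_succ]
  exact hunits _ _ _ _

/-- The index pair `(i,j) = (a+1,b)` of the product `s(i,j) = s(1,a) s(1,b)`. -/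
def indexPair : ℕ × ℕ ↪ ℕ × ℕ :=
  (addRightEmbedding 1).prodMap (.refl ℕ)

lemma indexPair_apply (a b : ℕ) : indexPair (a, b) = (a + 1, b) := rfl

lemma Jv_eq_map_crossPairs (hx : ∀ i ∈ Finset.Icc 1 n, x i ≠ 0) :
    Jv n x = (crossPairs (signColor x) (range (n + 1))).map indexPair := by
  ext ⟨i, j⟩
  simp only [Jv, mem_filter, mem_product, Finset.mem_Icc, mem_map, mem_crossPairs, mem_range,
    Prod.exists, indexPair_apply, Prod.mk.injEq]
  constructor
  · rintro ⟨⟨⟨hi, -⟩, -, hj⟩, hij, hs⟩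
    obtain ⟨a, rfl⟩ := Nat.exists_eq_add_of_le' hi
    exact ⟨a, j, ⟨by omega, hij, (psign_succ_eq_neg_one_pow_iff hx (by omega) hj).1 hs⟩, rfl, rfl⟩
  · rintro ⟨a, b, ⟨⟨-, hb⟩, hab, hc⟩, rfl, rfl⟩
    exact ⟨by omega, hab, (psign_succ_eq_neg_one_pow_iff hx hab.le (by omega)).2 hc⟩

lemma map_indexPair_product_pair (a a' b b' : ℕ) :
    ({a, a'} ×ˢ {b, b'} : Finset (ℕ × ℕ)).map indexPair =
      {(a + 1, b), (a' + 1, b), (a + 1, b'), (a' + 1, b')} := by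
  simp only [insert_eq, union_product, product_union, singleton_product_singleton, map_union,
    map_singleton, indexPair_apply]
  ac_rfl

lemma IsBlock.isType_map_indexPair (hx : ∀ i ∈ Finset.Icc 1 n, x i ≠ 0) {p : Finset (ℕ × ℕ)}
    (hp : p ⊆ crossPairs c (range (n + 1))) (h : IsBlock (prefixSign x) p) :
    IsType1 x (p.map indexPair) ∨ IsType2 x (p.map indexPair) ∨ IsType3 x (p.map indexPair) := by
  obtain ⟨e, _, _, ⟨a, a', ha, haa, ha', rfl⟩, ⟨b, b', hb, hbb, hb', rfl⟩, rfl⟩ := h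
  replace haa : a' ≤ a := haa
  replace hbb : b ≤ b' := hbb
  have hbound : ∀ y ∈ ({a, a'} : Finset ℕ), ∀ z ∈ ({b, b'} : Finset ℕ), y ≤ z ∧ z ≤ n := by
    intro y hy z hz
    have hyz := mem_crossPairs.1 (hp (mk_mem_product hy hz))
    exact ⟨hyz.2.1.le, Nat.lt_succ_iff.1 (mem_range.1 hyz.1.2)⟩
  simp only [mem_insert, mem_singleton, forall_eq_or_imp, forall_eq] at hbound
  obtain ⟨⟨⟨hab, hbn⟩, hab', hbn'⟩, ⟨ha'b, -⟩, ha'b', -⟩ := hbound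
  have hpos : psign x (a + 1) b = 1 := (psign_succ_eq_one_iff hx hab hbn).2 (ha.trans hb.symm)
  have hneg_left (ha' : prefixSign x a' ≠ e) : psign x (a' + 1) b = -1 :=
    (psign_succ_eq_neg_one_iff hx ha'b hbn).2 (hb ▸ ha')
  have hneg_right (hb' : prefixSign x b' ≠ e) : psign x (a + 1) b' = -1 :=
    (psign_succ_eq_neg_one_iff hx hab' hbn').2 (ha ▸ hb'.symm)
  rw [map_indexPair_product_pair]
  rcases ha' with rfl | ha' <;> rcases hb' with rfl | hb'
  · exact .inl ⟨_, _, by simp, hpos⟩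
  · exact .inr (.inl ⟨_, _, _, _, by simp, hpos, hneg_right hb', .inr ⟨rfl, hbb⟩⟩)
  · exact .inr (.inl ⟨_, _, _, _, by simp, hpos, hneg_left ha', .inl ⟨by omega, rfl⟩⟩)
  · have hne : a' ≠ a := by rintro rfl; exact ha' ha
    have hne' : b' ≠ b := by rintro rfl; exact hb' hb
    have hpos' : psign x (a' + 1) b' = 1 := (psign_succ_eq_one_iff hx ha'b' hbn').2
      ((Int.units_ne_iff_eq_neg.1 ha').trans (Int.units_ne_iff_eq_neg.1 hb').symm)
    obtain ⟨l, rfl⟩ := Nat.exists_eq_add_of_le haa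
    obtain ⟨l', rfl⟩ := Nat.exists_eq_add_of_le hbb
    have hl : a' + l + 1 - l = a' + 1 := by omega
    refine .inr (.inr ⟨a' + l + 1, b, l, l', by omega, by omega, ?_⟩)
    rw [hl]
    exact ⟨rfl, hpos, hpos', hneg_left ha', hneg_right hb'⟩

end Signs

theorem Jv_has_good_partition_general (n : ℕ) (x : ℕ → ℝ) (hx : ∀ i ∈ Finset.Icc 1 n, x i ≠ 0) :
    ∃ π : Finset (Finset (ℕ × ℕ)),
      (∀ p ∈ π, p.Nonempty) ∧
      (π : Set (Finset (ℕ × ℕ))).PairwiseDisjoint id ∧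
      π.biUnion id = Jv n x ∧
      (∀ p ∈ π, IsType1 x p ∨ IsType2 x p ∨ IsType3 x p) := by
  have hblocks : TiledBy (IsBlock (prefixSign x)) (crossPairs (signColor x) (range (n + 1))) :=
    tiledBy_crossPairs _ _ _ (isAlternating_signColor_mul_prefixSign x (n + 1))
  have htypes : TiledBy (fun p => IsType1 x p ∨ IsType2 x p ∨ IsType3 x p) (Jv n x) := by
    rw [Jv_eq_map_crossPairs hx]
    exact hblocks.map (fun _ _ => map_union _ _) (fun _ _ => (disjoint_map _).2)
      fun p hp h => h.isType_map_indexPair hx hp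
  obtain ⟨P, hP⟩ := htypes
  exact ⟨P.parts, fun p => P.nonempty_of_mem_parts, P.disjoint, P.biUnion_parts, hP⟩

theorem Jv_has_good_partition (n : ℕ) (x : ℕ → ℝ)
    (hx : ∀ i ∈ Finset.Icc 1 n, x i ∈ Set.Icc (-1 : ℝ) 1 ∧ x i ≠ 0) :
    ∃ π : Finset (Finset (ℕ × ℕ)),
      (∀ p ∈ π, p.Nonempty) ∧
      (π : Set (Finset (ℕ × ℕ))).PairwiseDisjoint id ∧
      π.biUnion id = Jv n x ∧
      (∀ p ∈ π, IsType1 x p ∨ IsType2 x p ∨ IsType3 x p) :=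
  Jv_has_good_partition_general n x fun i hi => (hx i hi).2
end
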